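/- Let φ : [0,∞) → [0,∞) be a non-decreasing function with φ(0) = 0 and φ(t)/t → 0 as t → ∞. There exists a time T ≥ max{T₀(φ), δ(CS(f),CS(h)) + d_f} such that for all t ≥ T, the set 𝒞(u(·,t)) ∩ (CS(h) + φ(t)Bⁿ) consists of exactly one point, where 𝒞(u(·,t)) = {x in the interior of the support of u(·,t) : ∇_x u(x,t) = 0}. -/

import Mathlib

/-!
If `u` solves the damped wave equation, then `v = e^{t/2} u` has the same critical points as `u`
and solves the Klein–Gordon equation `∂ₜ²v = Δv + v/4`, which is invariant under the Lorentz boosts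
`t ∂ⱼ + xⱼ ∂ₜ`. Put `P = ∂ₜ v` and `Qⱼ = t ∂ⱼ v + xⱼ ∂ₜ v`: wherever `P ≠ 0`, the gradient of
`v(·,t)` vanishes exactly at the fixed points of `x ↦ Q / P`.

Since `P` and every `Qⱼ` solve the Klein–Gordon equation too, their behaviour as `t → ∞` and
`x / t → 0` can be read off the Fourier inversion integral, shifted to the complex frequency of its
saddle: up to a common factor, a solution with data `(a, b)` tends to `∫ (a/2 + b)` and its gradient
tends to `0`. Therefore `Q / P` tends to the centroid of `h = f + g` and its derivative tends to
`0`. On a ball of radius `δ t` it is then a contraction whose fixed point lies close to the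
centroid, hence in the convex hull of the support of `h`.
-/

open Real Set Filter MeasureTheory Metric Pointwise
open scoped Nat Topology

noncomputable section

variable {n : ℕ}

/-- The Laplacian of `v : ℝⁿ → ℝ` at `x`, as the sum of second partial derivatives. -/
def lap (v : EuclideanSpace ℝ (Fin n) → ℝ) (x : EuclideanSpace ℝ (Fin n)) : ℝ :=
  ∑ i : Fin n, iteratedDeriv 2 (fun a : ℝ => v (x + a • EuclideanSpace.single i (1 : ℝ))) 0

/-- `CS(φ)`: the convex hull of the support of `φ`. -/
def CS (v : EuclideanSpace ℝ (Fin n) → ℝ) : Set (EuclideanSpace ℝ (Fin n)) :=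
  convexHull ℝ (tsupport v)

/-- `d_φ`: the diameter of the support of `φ`. -/
def dsupp (v : EuclideanSpace ℝ (Fin n) → ℝ) : ℝ := Metric.diam (tsupport v)

/-- `δ(K,L) = sup_{η ∈ L} dist(η, K)`. -/
def deltaCC (K L : Set (EuclideanSpace ℝ (Fin n))) : ℝ :=
  sSup ((fun η => Metric.infDist η K) '' L)

/-- The centroid `m_h = (∫ h(y) y dy)/(∫ h(y) dy)`. -/
def centroid (h : EuclideanSpace ℝ (Fin n) → ℝ) : EuclideanSpace ℝ (Fin n) :=
  (∫ y, h y)⁻¹ • ∫ y, h y • y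

/-- `T₀(φ) = min{T ≥ 0 : ∀ t ≥ T, t ≥ φ(t) + max{d_h, δ(CS(h),CS(f)) + d_f}}`, `h = f + g`. -/
def T0 (f g : EuclideanSpace ℝ (Fin n) → ℝ) (phi : ℝ → ℝ) : ℝ :=
  sInf {T : ℝ | 0 ≤ T ∧ ∀ t ≥ T,
    phi t + max (dsupp (f + g)) (deltaCC (CS (f + g)) (CS f) + dsupp f) ≤ t}

/-- Sobolev `W^{ℓ,∞}`-type norm: sum of sup-norms of the iterated derivatives up to order `ℓ`. -/
def sobNorm (ℓ : ℕ) (v : EuclideanSpace ℝ (Fin n) → ℝ) : ℝ :=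
  ∑ i ∈ Finset.range (ℓ + 1), ⨆ x, ‖iteratedFDeriv ℝ i v x‖

/-- The `L¹` norm. -/
def L1norm (v : EuclideanSpace ℝ (Fin n) → ℝ) : ℝ := ∫ y, |v y|

/-- The sup norm. -/
def LinfNorm (v : EuclideanSpace ℝ (Fin n) → ℝ) : ℝ := ⨆ x, |v x|

/-- `𝒞(v)`: the critical points of `v` lying in the interior of its support. -/
def critSet (v : EuclideanSpace ℝ (Fin n) → ℝ) : Set (EuclideanSpace ℝ (Fin n)) :=
  {x | x ∈ interior (tsupport v) ∧ gradient v x = 0}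

local notation "𝔼" => EuclideanSpace ℝ (Fin n)
local notation "𝐞" i:max => EuclideanSpace.single i (1 : ℝ)

/-! ### Partial derivatives up to time zero -/

/-- The closed half `ℝⁿ × [0,∞)` of space-time. -/
abbrev halfSpace (n : ℕ) : Set (EuclideanSpace ℝ (Fin n) × ℝ) := univ ×ˢ Ici 0

local notation "ℍ" => halfSpace n

/-- The derivative of a function of space and time in the space-time direction `V`, computed inside
the half-space; at `t = 0` it is one-sided in time. -/
def partialDeriv (V : 𝔼 × ℝ) (v : 𝔼 → ℝ → ℝ) (x : 𝔼) (t : ℝ) : ℝ :=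
  fderivWithin ℝ ↿v ℍ (x, t) V

/-- The time derivative, one-sided at `t = 0`. -/
def timeDeriv : (𝔼 → ℝ → ℝ) → 𝔼 → ℝ → ℝ := partialDeriv (0, 1)

/-- The spatial derivative in the `i`-th coordinate direction. -/
def spaceDeriv (i : Fin n) : (𝔼 → ℝ → ℝ) → 𝔼 → ℝ → ℝ := partialDeriv (𝐞 i, 0)

local notation "∂ₜ" => timeDeriv
local notation "∂ₓ" => spaceDeriv

section PartialDeriv

variable {v : EuclideanSpace ℝ (Fin n) → ℝ → ℝ} {k m : WithTop ℕ∞} {t : ℝ}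

theorem uniqueDiffOn_halfSpace : UniqueDiffOn ℝ ℍ :=
  uniqueDiffOn_univ.prod (uniqueDiffOn_Ici 0)

theorem halfSpace_mem_nhds (x : 𝔼) (ht : 0 < t) : ℍ ∈ 𝓝 (x, t) :=
  prod_mem_nhds univ_mem (Ici_mem_nhds ht)

theorem mapsTo_slice_halfSpace (ht : 0 ≤ t) : MapsTo (fun x : 𝔼 => (x, t)) univ ℍ :=
  fun _ _ => ⟨mem_univ _, ht⟩

theorem contDiffOn_partialDeriv (hv : ContDiffOn ℝ m ↿v ℍ) (hkm : k + 1 ≤ m) (V : 𝔼 × ℝ) :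
    ContDiffOn ℝ k ↿(partialDeriv V v) ℍ :=
  (hv.fderivWithin uniqueDiffOn_halfSpace hkm).clm_apply contDiffOn_const

theorem contDiff_slice (hv : ContDiffOn ℝ k ↿v ℍ) (ht : 0 ≤ t) : ContDiff ℝ k fun x => v x t :=
  contDiffOn_univ.1 (hv.comp (contDiff_prodMk_left t).contDiffOn (mapsTo_slice_halfSpace ht))

theorem continuous_slice {G : Type*} [TopologicalSpace G] {F : 𝔼 → ℝ → G}
    (hF : ContinuousOn ↿F ℍ) (ht : 0 ≤ t) : Continuous fun x => F x t :=
  hF.comp_continuous (by fun_prop : Continuous fun x : 𝔼 => (x, t)) fun _ => ⟨mem_univ _, ht⟩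

theorem hasFDerivWithinAt_halfSpace (hv : ContDiffOn ℝ 1 ↿v ℍ) (x : 𝔼) (ht : 0 ≤ t) :
    HasFDerivWithinAt ↿v (fderivWithin ℝ ↿v ℍ (x, t)) ℍ (x, t) :=
  (hv.differentiableOn one_ne_zero (x, t) ⟨mem_univ x, ht⟩).hasFDerivWithinAt

theorem fderiv_slice_apply (hv : ContDiffOn ℝ 1 ↿v ℍ) (x : 𝔼) (ht : 0 ≤ t) (w : 𝔼) :
    fderiv ℝ (fun z => v z t) x w = partialDeriv (w, 0) v x t := by
  have h : HasFDerivAt (fun z => v z t)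
      ((fderivWithin ℝ ↿v ℍ (x, t)).comp (ContinuousLinearMap.inl ℝ 𝔼 ℝ)) x :=
    hasFDerivWithinAt_univ.1 (HasFDerivWithinAt.comp (g := ↿v) (f := fun z => (z, t)) x
      (hasFDerivWithinAt_halfSpace hv x ht) (hasFDerivAt_prodMk_left x t).hasFDerivWithinAt
      (mapsTo_slice_halfSpace ht))
  rw [h.fderiv]
  rfl

theorem hasDerivWithinAt_timeDeriv (hv : ContDiffOn ℝ 1 ↿v ℍ) (x : 𝔼) (ht : 0 ≤ t) :
    HasDerivWithinAt (v x) (∂ₜ v x t) (Ici 0) t :=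
  (hasFDerivWithinAt_halfSpace hv x ht).comp_hasDerivWithinAt t
    ((hasDerivAt_const t x).prodMk (hasDerivAt_id t)).hasDerivWithinAt fun _ hs => ⟨mem_univ _, hs⟩

theorem hasDerivAt_timeDeriv (hv : ContDiffOn ℝ 1 ↿v ℍ) (x : 𝔼) (ht : 0 < t) :
    HasDerivAt (v x) (∂ₜ v x t) t :=
  (hasDerivWithinAt_timeDeriv hv x ht.le).hasDerivAt (Ici_mem_nhds ht)

theorem deriv_deriv_eq_timeDeriv (hv : ContDiffOn ℝ 2 ↿v ℍ) (x : 𝔼) (ht : 0 < t) :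
    deriv (deriv (v x)) t = ∂ₜ (∂ₜ v) x t := by
  have h : deriv (v x) =ᶠ[𝓝 t] ∂ₜ v x := by
    filter_upwards [Ioi_mem_nhds ht] with s hs
    exact (hasDerivAt_timeDeriv (hv.of_le one_le_two) x hs).deriv
  rw [h.deriv_eq]
  exact (hasDerivAt_timeDeriv (contDiffOn_partialDeriv hv le_rfl _) x ht).deriv

theorem partialDeriv_comm (hv : ContDiffOn ℝ 2 ↿v ℍ) (V W : 𝔼 × ℝ) (x : 𝔼) (ht : 0 < t) :
    partialDeriv V (partialDeriv W v) x t = partialDeriv W (partialDeriv V v) x t := by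
  have hnhds := halfSpace_mem_nhds x ht
  have hsnd : ∀ V W, partialDeriv V (partialDeriv W v) x t =
      fderiv ℝ (fderiv ℝ ↿v) (x, t) V W := fun V W => by
    have heq : ↿(partialDeriv W v) =ᶠ[𝓝 (x, t)] fun p => fderiv ℝ ↿v p W := by
      filter_upwards [eventually_mem_nhds_iff.2 hnhds] with p hp
      exact congrArg (fun L : 𝔼 × ℝ →L[ℝ] ℝ => L W) (fderivWithin_of_mem_nhds hp)
    have hd : DifferentiableAt ℝ (fderiv ℝ ↿v) (x, t) :=
      ((hv.contDiffAt hnhds).fderiv_right le_rfl).differentiableAt one_ne_zero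
    rw [partialDeriv, fderivWithin_of_mem_nhds hnhds, heq.fderiv_eq,
      fderiv_clm_apply hd (differentiableAt_const W)]
    simp
  rw [hsnd, hsnd]
  exact (hv.contDiffAt hnhds).isSymmSndFDerivAt (by simp) V W

theorem lap_slice (hv : ContDiffOn ℝ 2 ↿v ℍ) (x : 𝔼) (ht : 0 ≤ t) :
    lap (fun z => v z t) x = ∑ i, ∂ₓ i (∂ₓ i v) x t := by
  refine Finset.sum_congr rfl fun i _ => ?_
  have hline : ∀ {w : 𝔼 → ℝ → ℝ}, ContDiffOn ℝ 1 ↿w ℍ → ∀ a : ℝ,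
      HasDerivAt (fun a : ℝ => w (x + a • 𝐞 i) t) (∂ₓ i w (x + a • 𝐞 i) t) a := by
    intro w hw a
    have hl : HasDerivAt (fun a : ℝ => x + a • 𝐞 i) (𝐞 i) a := by
      simpa using ((hasDerivAt_id a).smul_const (𝐞 i)).const_add x
    have h := (((contDiff_slice hw ht).differentiable one_ne_zero
      (x + a • 𝐞 i)).hasFDerivAt).comp_hasDerivAt a hl
    rwa [fderiv_slice_apply hw _ ht] at h
  have hd : deriv (fun a : ℝ => v (x + a • 𝐞 i) t) = fun a => ∂ₓ i v (x + a • 𝐞 i) t :=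
    funext fun a => (hline (hv.of_le one_le_two) a).deriv
  have hd' := (hline (w := ∂ₓ i v) (contDiffOn_partialDeriv hv le_rfl _) 0).deriv
  rw [iteratedDeriv_succ, iteratedDeriv_one, hd, hd', zero_smul, add_zero]

theorem partialDeriv_add_const_mul (c : ℝ) {w : 𝔼 → ℝ → ℝ} (hv : ContDiffOn ℝ 1 ↿v ℍ)
    (hw : ContDiffOn ℝ 1 ↿w ℍ) (V : 𝔼 × ℝ) (x : 𝔼) (ht : 0 ≤ t) :
    partialDeriv V (fun x t => v x t + c * w x t) x t =
      partialDeriv V v x t + c * partialDeriv V w x t :=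
  congrArg (fun L : 𝔼 × ℝ →L[ℝ] ℝ => L V) <| ((hasFDerivWithinAt_halfSpace hv x ht).add
    ((hasFDerivWithinAt_halfSpace hw x ht).const_mul c)).fderivWithin
      (uniqueDiffOn_halfSpace _ ⟨mem_univ x, ht⟩)

theorem partialDeriv_mul {w : 𝔼 → ℝ → ℝ} (hv : ContDiffOn ℝ 1 ↿v ℍ) (hw : ContDiffOn ℝ 1 ↿w ℍ)
    (V : 𝔼 × ℝ) (x : 𝔼) (ht : 0 ≤ t) : partialDeriv V (fun x t => v x t * w x t) x t =
      partialDeriv V v x t * w x t + v x t * partialDeriv V w x t := by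
  have h := ((hasFDerivWithinAt_halfSpace hv x ht).mul
    (hasFDerivWithinAt_halfSpace hw x ht)).fderivWithin
    (uniqueDiffOn_halfSpace _ ⟨mem_univ x, ht⟩)
  refine (congrArg (fun L : 𝔼 × ℝ →L[ℝ] ℝ => L V) h).trans ?_
  simp only [Function.HasUncurry.uncurry, id_eq, add_apply, smul_apply, smul_eq_mul, partialDeriv]
  ring

theorem partialDeriv_exp_mul (c : ℝ) (hv : ContDiffOn ℝ 1 ↿v ℍ) (V : 𝔼 × ℝ) (x : 𝔼)
    (ht : 0 ≤ t) : partialDeriv V (fun x t => Real.exp (c * t) * v x t) x t =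
      Real.exp (c * t) * (partialDeriv V v x t + c * V.2 * v x t) := by
  have hexp : HasFDerivAt (fun p : 𝔼 × ℝ => Real.exp (c * p.2))
      (Real.exp (c * t) • c • ContinuousLinearMap.snd ℝ 𝔼 ℝ) (x, t) :=
    (((ContinuousLinearMap.snd ℝ 𝔼 ℝ).hasFDerivAt (x := (x, t))).const_mul c).exp
  have hV : partialDeriv V (fun _ t => Real.exp (c * t)) x t = Real.exp (c * t) * (c * V.2) :=
    congrArg (fun L : 𝔼 × ℝ →L[ℝ] ℝ => L V) <|
      hexp.hasFDerivWithinAt.fderivWithin (uniqueDiffOn_halfSpace _ ⟨mem_univ x, ht⟩)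
  rw [partialDeriv_mul (by fun_prop) hv V x ht, hV]
  ring

theorem partialDeriv_congr {w : 𝔼 → ℝ → ℝ} (h : ∀ x s, 0 ≤ s → v x s = w x s) (V : 𝔼 × ℝ)
    (x : 𝔼) (ht : 0 ≤ t) : partialDeriv V v x t = partialDeriv V w x t :=
  congrArg (fun L : 𝔼 × ℝ →L[ℝ] ℝ => L V)
    (fderivWithin_congr (fun p hp => h p.1 p.2 hp.2) (h x t ht))

end PartialDeriv

/-- `v` is a `C²` solution of the Klein-Gordon equation `∂ₜ²v = Δv + c v` on `ℝⁿ × [0,∞)` with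
initial data `(f, k)`; the mass is imaginary when `c > 0`. -/
structure KleinGordon (c : ℝ) (f k : 𝔼 → ℝ) (v : 𝔼 → ℝ → ℝ) : Prop where
  contDiffOn : ContDiffOn ℝ 2 ↿v ℍ
  pde : ∀ x t, 0 < t → ∂ₜ (∂ₜ v) x t = ∑ i, ∂ₓ i (∂ₓ i v) x t + c * v x t
  init : ∀ x, v x 0 = f x
  init_timeDeriv : ∀ x, ∂ₜ v x 0 = k x

theorem kleinGordon_exp_mul_of_dampedWave {f g : 𝔼 → ℝ} {u : 𝔼 → ℝ → ℝ}
    (hreg : ContDiffOn ℝ 2 ↿u ℍ)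
    (hpde : ∀ x, ∀ t > (0 : ℝ), deriv (deriv (u x)) t - lap (fun z => u z t) x + deriv (u x) t = 0)
    (hu0 : ∀ x, u x 0 = f x) (hu1 : ∀ x, derivWithin (u x) (Ici 0) 0 = g x) :
    KleinGordon (1 / 4) f (fun x => g x + 1 / 2 * f x)
      fun x t => Real.exp (1 / 2 * t) * u x t := by
  have hu : ContDiffOn ℝ 1 ↿u ℍ := hreg.of_le one_le_two
  have hsnd : ∀ (V : 𝔼 × ℝ) x t, 0 ≤ t →
      partialDeriv V (partialDeriv V fun x t => Real.exp (1 / 2 * t) * u x t) x t =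
        Real.exp (1 / 2 * t) * (partialDeriv V (partialDeriv V u) x t +
          V.2 * partialDeriv V u x t + 1 / 4 * V.2 ^ 2 * u x t) := fun V x t ht => by
    have hDu := contDiffOn_partialDeriv (k := 1) hreg le_rfl V
    have hsplit : ∀ x s, 0 ≤ s → partialDeriv V (fun x t => Real.exp (1 / 2 * t) * u x t) x s =
        Real.exp (1 / 2 * s) * (partialDeriv V u x s + 1 / 2 * V.2 * u x s) := fun x s hs =>
      partialDeriv_exp_mul _ hu V x hs
    rw [partialDeriv_congr hsplit V x ht,
      partialDeriv_exp_mul _ (hDu.add (contDiffOn_const.mul hu)) V x ht,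
      partialDeriv_add_const_mul _ hDu hu V x ht]
    ring
  refine ⟨ContDiffOn.mul (by fun_prop) hreg, fun x t ht => ?_, fun x => by simp [hu0],
    fun x => ?_⟩
  · have heq := hpde x t ht
    rw [deriv_deriv_eq_timeDeriv hreg x ht, lap_slice hreg x ht.le,
      (hasDerivAt_timeDeriv hu x ht).deriv] at heq
    simp only [timeDeriv, spaceDeriv] at heq ⊢
    simp only [hsnd _ x t ht.le, mul_zero, zero_mul, add_zero, ne_eq, OfNat.ofNat_ne_zero,
      not_false_eq_true, zero_pow, ← Finset.mul_sum]
    linear_combination Real.exp (1 / 2 * t) * heq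
  · have h1 := (hasDerivWithinAt_timeDeriv hu x le_rfl).derivWithin
      (uniqueDiffOn_Ici 0 0 self_mem_Ici)
    rw [hu1] at h1
    rw [timeDeriv, partialDeriv_exp_mul _ hu _ x le_rfl, ← timeDeriv, ← h1, hu0]
    simp

/-! ### Finite speed of propagation -/

/-- The slices of `F` at times in a bounded interval `[0, T]` vanish outside a common compact
set. -/
def SpatiallyCompact {G : Type*} [Zero G] (F : 𝔼 → ℝ → G) : Prop :=
  ∀ T, ∃ K : Set 𝔼, IsCompact K ∧ ∀ x ∉ K, ∀ t ∈ Icc 0 T, F x t = 0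

namespace SpatiallyCompact

variable {G : Type*} {t : ℝ}

theorem mono {H : Type*} [Zero G] [Zero H] {F : 𝔼 → ℝ → G} {F' : 𝔼 → ℝ → H}
    (hF : SpatiallyCompact F) (h : ∀ x t, F x t = 0 → F' x t = 0) : SpatiallyCompact F' := fun T =>
  let ⟨K, hK, hFK⟩ := hF T
  ⟨K, hK, fun x hx t ht => h x t (hFK x hx t ht)⟩

theorem hasCompactSupport [Zero G] {F : 𝔼 → ℝ → G} (hF : SpatiallyCompact F) (ht : 0 ≤ t) :
    HasCompactSupport fun x => F x t :=
  let ⟨_, hK, hFK⟩ := hF t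
  HasCompactSupport.intro hK fun x hx => hFK x hx t ⟨ht, le_rfl⟩

theorem partialDeriv {F : 𝔼 → ℝ → ℝ} (hF : SpatiallyCompact F) (V : 𝔼 × ℝ) :
    SpatiallyCompact (partialDeriv V F) := fun T => by
  obtain ⟨K, hK, hFK⟩ := hF (T + 1)
  refine ⟨K, hK, fun x hx t ht => ?_⟩
  have h : ↿F =ᶠ[𝓝[ℍ] (x, t)] fun _ => 0 := by
    filter_upwards [self_mem_nhdsWithin, mem_nhdsWithin_of_mem_nhds (prod_mem_nhds
      (hK.isClosed.isOpen_compl.mem_nhds hx) (Iio_mem_nhds (ht.2.trans_lt (lt_add_one T))))]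
      with p hp hpK
    exact hFK p.1 hpK.1 p.2 ⟨hp.2, le_of_lt hpK.2⟩
  rw [_root_.partialDeriv, h.fderivWithin_eq_of_mem ⟨mem_univ x, ht.1⟩]
  simp

variable [NormedAddCommGroup G] {F F' : EuclideanSpace ℝ (Fin n) → ℝ → G}

theorem integrable (hF : SpatiallyCompact F) (hc : ContinuousOn ↿F ℍ) (ht : 0 ≤ t) :
    Integrable fun x => F x t :=
  (continuous_slice hc ht).integrable_of_hasCompactSupport (hF.hasCompactSupport ht)

variable [NormedSpace ℝ G]

theorem continuousOn_integral (hF : SpatiallyCompact F) (hc : ContinuousOn ↿F ℍ) (T : ℝ) :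
    ContinuousOn (fun t => ∫ x, F x t) (Icc 0 T) :=
  let ⟨_, hK, hFK⟩ := hF T
  continuousOn_integral_of_compact_support (f := fun t x => F x t) hK
    (hc.comp continuous_swap.continuousOn fun _ hp => ⟨mem_univ _, hp.1.1⟩)
    fun t x ht hx => hFK x hx t ht

theorem hasDerivAt_integral (hF : SpatiallyCompact F) (hF' : SpatiallyCompact F')
    (hc : ContinuousOn ↿F ℍ) (hc' : ContinuousOn ↿F' ℍ)
    (hder : ∀ x t, 0 < t → HasDerivAt (F x) (F' x t) t) (ht : 0 < t) :
    HasDerivAt (fun t => ∫ x, F x t) (∫ x, F' x t) t := by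
  obtain ⟨K, hK, hFK⟩ := hF' (t + 1)
  obtain ⟨M, hM⟩ :=
    (hK.prod (isCompact_Icc (a := (0 : ℝ)) (b := t + 1))).exists_bound_of_continuousOn
      (hc'.mono fun p hp => ⟨mem_univ _, hp.2.1⟩)
  have hnhds : Ioo 0 (t + 1) ∈ 𝓝 t := Ioo_mem_nhds ht (lt_add_one t)
  refine (hasDerivAt_integral_of_dominated_loc_of_deriv_le (F := fun s x => F x s)
    (F' := fun s x => F' x s) (bound := K.indicator fun _ => M) hnhds ?_
    (hF.integrable hc ht.le) (continuous_slice hc' ht.le).aestronglyMeasurable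
    (Eventually.of_forall fun x s hs => ?_)
    ((integrable_indicator_iff hK.measurableSet).2 (integrableOn_const hK.measure_lt_top.ne))
    (Eventually.of_forall fun x s hs => hder x s hs.1)).2
  · filter_upwards [hnhds] with s hs
    exact (continuous_slice hc hs.1.le).aestronglyMeasurable
  · by_cases hx : x ∈ K
    · simpa [hx, Function.HasUncurry.uncurry] using hM (x, s) ⟨hx, hs.1.le, hs.2.le⟩
    · simp [hx, hFK x hx s ⟨hs.1.le, hs.2.le⟩]

end SpatiallyCompact

theorem integral_smul_fderiv_of_compact {G : Type*} [NormedAddCommGroup G] [NormedSpace ℝ G]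
    {ψ : 𝔼 → ℝ} {e : 𝔼 → G} (hψ : ContDiff ℝ 1 ψ) (hψc : HasCompactSupport ψ)
    (he : ContDiff ℝ 1 e) (v : 𝔼) :
    ∫ x, ψ x • fderiv ℝ e x v = -∫ x, fderiv ℝ ψ x v • e x := by
  have hψ' : Continuous fun x => fderiv ℝ ψ x v :=
    (hψ.continuous_fderiv one_ne_zero).clm_apply continuous_const
  have he' : Continuous fun x => fderiv ℝ e x v :=
    (he.continuous_fderiv one_ne_zero).clm_apply continuous_const
  have hψc' : HasCompactSupport fun x => fderiv ℝ ψ x v := hψc.fderiv_apply (𝕜 := ℝ) v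
  exact integral_smul_fderiv_eq_neg_fderiv_smul_of_integrable
    ((hψ'.smul he.continuous).integrable_of_hasCompactSupport hψc'.smul_right)
    ((hψ.continuous.smul he').integrable_of_hasCompactSupport hψc.smul_right)
    ((hψ.continuous.smul he.continuous).integrable_of_hasCompactSupport hψc.smul_right)
    (fun x _ => (hψ.differentiable one_ne_zero) x) (fun x _ => (he.differentiable one_ne_zero) x)

theorem integral_spaceDeriv_eq_zero {F : 𝔼 → ℝ → ℝ} {t : ℝ} (hF : SpatiallyCompact F)
    (hc : ContDiffOn ℝ 1 ↿F ℍ) (ht : 0 ≤ t) (i : Fin n) : ∫ x, ∂ₓ i F x t = 0 := by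
  have h := integral_smul_fderiv_of_compact (contDiff_slice hc ht) (hF.hasCompactSupport ht)
    (contDiff_const (c := (1 : ℝ))) (𝐞 i)
  simpa [fderiv_slice_apply hc _ ht, spaceDeriv] using h

theorem continuousOn_partialDeriv {F : 𝔼 → ℝ → ℝ} (hc : ContDiffOn ℝ 1 ↿F ℍ) (V : 𝔼 × ℝ) :
    ContinuousOn ↿(partialDeriv V F) ℍ :=
  (contDiffOn_partialDeriv (k := 0) hc (zero_add _).le V).continuousOn

theorem nonpos_of_hasDerivAt_le_mul {E E' : ℝ → ℝ} {K T : ℝ} (hT : 0 ≤ T)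
    (hE : ContinuousOn E (Icc 0 T)) (hE' : ∀ s ∈ Ioo 0 T, HasDerivAt E (E' s) s)
    (hle : ∀ s ∈ Ioo 0 T, E' s ≤ K * E s) (h0 : E 0 ≤ 0) : E T ≤ 0 := by
  have hanti : AntitoneOn (fun s => Real.exp (-K * s) * E s) (Icc 0 T) := by
    refine antitoneOn_of_hasDerivWithinAt_nonpos (convex_Icc 0 T)
      ((by fun_prop : Continuous fun s : ℝ => Real.exp (-K * s)).continuousOn.mul hE)
      (f' := fun s => Real.exp (-K * s) * (E' s - K * E s)) ?_ ?_ <;>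
    rw [interior_Icc] <;> intro s hs
    · have hexp : HasDerivAt (fun s => Real.exp (-K * s)) (Real.exp (-K * s) * -K) s := by
        simpa using ((hasDerivAt_id s).const_mul (-K)).exp
      exact ((hexp.mul (hE' s hs)).congr_deriv (by ring)).hasDerivWithinAt
    · exact mul_nonpos_of_nonneg_of_nonpos (Real.exp_pos _).le (sub_nonpos.2 (hle s hs))
  have h := hanti ⟨le_rfl, hT⟩ ⟨hT, le_rfl⟩ hT
  simp only [mul_zero, Real.exp_zero, one_mul] at h
  exact nonpos_of_mul_nonpos_right (h.trans h0) (Real.exp_pos _)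

/-- A smooth cutoff that is positive exactly inside the backward light cone with vertex
`(x₀, r)`, up to time `r`. -/
def coneCutoff (x₀ : 𝔼) (r : ℝ) (x : 𝔼) (t : ℝ) : ℝ :=
  smoothTransition ((r - t) ^ 2 - ‖x - x₀‖ ^ 2)

/-- The energy density of the wave equation, with mass `1`. -/
def energyDensity (v : 𝔼 → ℝ → ℝ) (x : 𝔼) (t : ℝ) : ℝ :=
  (∂ₜ v x t ^ 2 + ∑ i, ∂ₓ i v x t ^ 2 + v x t ^ 2) / 2

section Energy

variable {x₀ x : EuclideanSpace ℝ (Fin n)} {r t : ℝ} {v : EuclideanSpace ℝ (Fin n) → ℝ → ℝ}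

theorem contDiff_coneCutoff (x₀ : 𝔼) (r : ℝ) : ContDiff ℝ 1 ↿(coneCutoff x₀ r) :=
  smoothTransition.contDiff.comp (((contDiff_const.sub contDiff_snd).pow 2).sub
    ((contDiff_fst.sub contDiff_const).norm_sq ℝ))

theorem coneCutoff_nonneg (x₀ : 𝔼) (r : ℝ) (x : 𝔼) (t : ℝ) : 0 ≤ coneCutoff x₀ r x t :=
  smoothTransition.nonneg _

theorem coneCutoff_eq_zero (ht : t ≤ r) (hx : r - t ≤ ‖x - x₀‖) : coneCutoff x₀ r x t = 0 :=
  smoothTransition.zero_of_nonpos (by nlinarith)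

theorem coneCutoff_pos (ht : t < r) : 0 < coneCutoff x₀ r x₀ t :=
  smoothTransition.pos_of_pos (by simpa using (pow_pos (sub_pos.2 ht) 2))

theorem spatiallyCompact_coneCutoff (x₀ : 𝔼) (r : ℝ) : SpatiallyCompact (coneCutoff x₀ r) :=
  fun T => ⟨closedBall x₀ (|r| + T), isCompact_closedBall _ _, fun x hx t ht => by
    rw [mem_closedBall, dist_eq_norm, not_le] at hx
    have h : |r - t| ≤ |‖x - x₀‖| := by
      have := abs_sub r t
      rw [abs_norm]
      linarith [abs_of_nonneg ht.1, ht.2]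
    exact smoothTransition.zero_of_nonpos (sub_nonpos.2 (sq_le_sq.2 h))⟩

theorem partialDeriv_coneCutoff (V : 𝔼 × ℝ) (ht : 0 ≤ t) :
    partialDeriv V (coneCutoff x₀ r) x t =
      -2 * deriv smoothTransition ((r - t) ^ 2 - ‖x - x₀‖ ^ 2) *
        ((r - t) * V.2 + inner ℝ (x - x₀) V.1) := by
  have h1 := (((ContinuousLinearMap.snd ℝ 𝔼 ℝ).hasFDerivAt (x := (x, t))).const_sub r).pow 2
  have h2 := (((ContinuousLinearMap.fst ℝ 𝔼 ℝ).hasFDerivAt (x := (x, t))).sub_const x₀).norm_sq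
  have h3 := ((smoothTransition.contDiff (n := 1)).differentiable one_ne_zero
    ((r - t) ^ 2 - ‖x - x₀‖ ^ 2)).hasDerivAt.comp_hasFDerivAt (x, t) (h1.sub h2)
  refine (congrArg (fun L : 𝔼 × ℝ →L[ℝ] ℝ => L V) (h3.hasFDerivWithinAt.fderivWithin
    (uniqueDiffOn_halfSpace _ ⟨mem_univ x, ht⟩))).trans ?_
  simp only [ContinuousLinearMap.coe_snd', Nat.add_one_sub_one, pow_one, nsmul_eq_mul,
    Nat.cast_ofNat, smul_neg, ContinuousLinearMap.coe_fst', map_sub, ContinuousLinearMap.sub_comp,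
    smul_apply, sub_apply, neg_apply, smul_eq_mul, ContinuousLinearMap.comp_apply,
    coe_innerSL_apply, neg_mul, inner_sub_left]
  ring

theorem deriv_smoothTransition_of_neg {s : ℝ} (hs : s < 0) : deriv smoothTransition s = 0 := by
  have h : smoothTransition =ᶠ[𝓝 s] fun _ => 0 := by
    filter_upwards [Iio_mem_nhds hs] with y hy
    exact smoothTransition.zero_of_nonpos (le_of_lt hy)
  rw [h.deriv_eq, deriv_const]

theorem timeDeriv_coneCutoff_nonpos (ht : 0 ≤ t) (hr : t ≤ r) : ∂ₜ (coneCutoff x₀ r) x t ≤ 0 := by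
  have h := mul_nonneg (smoothTransition.monotone.deriv_nonneg
    (x := (r - t) ^ 2 - ‖x - x₀‖ ^ 2)) (sub_nonneg.2 hr)
  rw [timeDeriv, partialDeriv_coneCutoff _ ht, inner_zero_right]
  linarith

theorem sum_sq_spaceDeriv_coneCutoff_le (ht : 0 ≤ t) :
    ∑ i, ∂ₓ i (coneCutoff x₀ r) x t ^ 2 ≤ ∂ₜ (coneCutoff x₀ r) x t ^ 2 := by
  simp only [timeDeriv, spaceDeriv, partialDeriv_coneCutoff _ ht, mul_zero, mul_one, zero_add,
    inner_zero_right, add_zero, mul_pow, ← Finset.mul_sum, EuclideanSpace.inner_single_right,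
    one_mul, conj_trivial, ← EuclideanSpace.real_norm_sq_eq]
  rcases lt_or_ge ((r - t) ^ 2 - ‖x - x₀‖ ^ 2) 0 with hs | hs
  · simp [deriv_smoothTransition_of_neg hs]
  · exact mul_le_mul_of_nonneg_left (sub_nonneg.1 hs) (by positivity)

theorem mul_sum_sub_sum_nonpos {ι : Type*} {s : Finset ι} {a p : ℝ} {b q : ι → ℝ} (ha : a ≤ 0)
    (hb : ∑ i ∈ s, b i ^ 2 ≤ a ^ 2) :
    a * ((p ^ 2 + ∑ i ∈ s, q i ^ 2) / 2) - ∑ i ∈ s, b i * (p * q i) ≤ 0 := by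
  have hq : 0 ≤ ∑ i ∈ s, q i ^ 2 := Finset.sum_nonneg fun i _ => sq_nonneg _
  have hpq : 0 ≤ p ^ 2 + ∑ i ∈ s, q i ^ 2 := add_nonneg (sq_nonneg p) hq
  have hcs : (∑ i ∈ s, b i * (p * q i)) ^ 2 ≤ (-a * ((p ^ 2 + ∑ i ∈ s, q i ^ 2) / 2)) ^ 2 :=
    calc (∑ i ∈ s, b i * (p * q i)) ^ 2
        ≤ (∑ i ∈ s, b i ^ 2) * ∑ i ∈ s, (p * q i) ^ 2 := Finset.sum_mul_sq_le_sq_mul_sq s b _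
      _ ≤ a ^ 2 * (p ^ 2 * ∑ i ∈ s, q i ^ 2) := by
          simp only [mul_pow, ← Finset.mul_sum]
          gcongr
      _ ≤ a ^ 2 * ((p ^ 2 + ∑ i ∈ s, q i ^ 2) / 2) ^ 2 := by
          gcongr
          nlinarith [sq_nonneg (p ^ 2 - ∑ i ∈ s, q i ^ 2)]
      _ = _ := by ring
  have habs := abs_le_of_sq_le_sq hcs (mul_nonneg (neg_nonneg.2 ha) (div_nonneg hpq zero_le_two))
  linarith [neg_le_of_abs_le habs]

theorem energyDensity_nonneg (v : 𝔼 → ℝ → ℝ) (x : 𝔼) (t : ℝ) : 0 ≤ energyDensity v x t := by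
  unfold energyDensity
  positivity

theorem contDiffOn_energyDensity (hv : ContDiffOn ℝ 2 ↿v ℍ) :
    ContDiffOn ℝ 1 ↿(energyDensity v) ℍ :=
  ((((contDiffOn_partialDeriv hv le_rfl _).pow 2).add (ContDiffOn.sum fun _ _ =>
    (contDiffOn_partialDeriv hv le_rfl _).pow 2)).add
      ((hv.of_le one_le_two).pow 2)).div_const 2

theorem timeDeriv_energyDensity (hv : ContDiffOn ℝ 2 ↿v ℍ) (x : 𝔼) (ht : 0 < t) :
    ∂ₜ (energyDensity v) x t = ∂ₜ v x t * ∂ₜ (∂ₜ v) x t +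
      ∑ i, ∂ₓ i v x t * ∂ₜ (∂ₓ i v) x t + v x t * ∂ₜ v x t := by
  have hd : ∀ V, HasDerivAt (partialDeriv V v x) (∂ₜ (partialDeriv V v) x t) t := fun V =>
    hasDerivAt_timeDeriv (contDiffOn_partialDeriv hv le_rfl V) x ht
  have hsum := HasDerivAt.fun_sum (u := Finset.univ) fun i _ => (hd (𝐞 i, 0)).pow 2
  have h := (((((hd (0, 1)).pow 2).add hsum).add
    ((hasDerivAt_timeDeriv (hv.of_le one_le_two) x ht).pow 2)).div_const 2)
  refine (hasDerivAt_timeDeriv (contDiffOn_energyDensity hv) x ht).unique (h.congr_deriv ?_)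
  simp only [Nat.cast_ofNat, Nat.add_one_sub_one, pow_one, mul_assoc, ← Finset.mul_sum]
  simp only [timeDeriv, spaceDeriv]
  ring

end Energy

namespace KleinGordon

variable {x₀ x : EuclideanSpace ℝ (Fin n)} {r t c : ℝ} {v : EuclideanSpace ℝ (Fin n) → ℝ → ℝ}
  {f k : EuclideanSpace ℝ (Fin n) → ℝ}

theorem timeDeriv_cutoff_energyDensity_le (W : KleinGordon c f k v) (x : 𝔼) (ht : 0 < t)
    (hr : t ≤ r) :
    ∂ₜ (fun x t => coneCutoff x₀ r x t * energyDensity v x t) x t -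
      ∑ i, ∂ₓ i (fun x t => coneCutoff x₀ r x t * (∂ₜ v x t * ∂ₓ i v x t)) x t ≤
    (1 + |c|) * (coneCutoff x₀ r x t * energyDensity v x t) := by
  set χ := coneCutoff x₀ r
  have hχ : ContDiffOn ℝ 1 ↿χ ℍ := (contDiff_coneCutoff x₀ r).contDiffOn
  have hD : ∀ V, ContDiffOn ℝ 1 ↿(partialDeriv V v) ℍ := fun V =>
    contDiffOn_partialDeriv W.contDiffOn le_rfl V
  have hflux : ∀ i, ∂ₓ i (fun x t => χ x t * (∂ₜ v x t * ∂ₓ i v x t)) x t =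
      ∂ₓ i χ x t * (∂ₜ v x t * ∂ₓ i v x t) +
        χ x t * (∂ₓ i v x t * ∂ₜ (∂ₓ i v) x t + ∂ₜ v x t * ∂ₓ i (∂ₓ i v) x t) := fun i => by
    rw [spaceDeriv, partialDeriv_mul hχ ((hD _).mul (hD _)) _ x ht.le, timeDeriv,
      partialDeriv_mul (hD _) (hD _) _ x ht.le, partialDeriv_comm W.contDiffOn (𝐞 i, 0) (0, 1) x ht]
    ring
  have hcone := mul_sum_sub_sum_nonpos (p := ∂ₜ v x t) (q := fun i => ∂ₓ i v x t)
    (timeDeriv_coneCutoff_nonpos (x₀ := x₀) (x := x) ht.le hr)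
    (sum_sq_spaceDeriv_coneCutoff_le ht.le)
  have hmass : (1 + c) * (v x t * ∂ₜ v x t) ≤ (1 + |c|) * energyDensity v x t := by
    have hc : |1 + c| ≤ 1 + |c| := by simpa using abs_add_le 1 c
    have hvv : |v x t * ∂ₜ v x t| ≤ energyDensity v x t := by
      have hsum : 0 ≤ ∑ i, ∂ₓ i v x t ^ 2 := Finset.sum_nonneg fun i _ => sq_nonneg _
      rw [energyDensity, abs_le]
      constructor <;> nlinarith [sq_nonneg (v x t + ∂ₜ v x t), sq_nonneg (v x t - ∂ₜ v x t)]
    refine (le_abs_self _).trans ?_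
    rw [abs_mul]
    gcongr
  have hmass' := mul_le_mul_of_nonneg_left hmass (coneCutoff_nonneg x₀ r x t)
  have hpot := mul_nonpos_of_nonpos_of_nonneg
    (timeDeriv_coneCutoff_nonpos (x₀ := x₀) (x := x) ht.le hr) (sq_nonneg (v x t))
  simp only [hflux, Finset.sum_add_distrib, ← Finset.mul_sum]
  rw [timeDeriv, partialDeriv_mul hχ (contDiffOn_energyDensity W.contDiffOn) _ x ht.le,
    ← timeDeriv, timeDeriv_energyDensity W.contDiffOn x ht, W.pde x t ht]
  simp only [energyDensity] at hcone hmass' ⊢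
  nlinarith

theorem integral_timeDeriv_cutoff_energyDensity_le (W : KleinGordon c f k v) (ht : 0 < t)
    (hr : t ≤ r) : ∫ x, ∂ₜ (fun x t => coneCutoff x₀ r x t * energyDensity v x t) x t ≤
      (1 + |c|) * ∫ x, coneCutoff x₀ r x t * energyDensity v x t := by
  set F : 𝔼 → ℝ → ℝ := fun x t => coneCutoff x₀ r x t * energyDensity v x t
  set J : Fin n → 𝔼 → ℝ → ℝ := fun i x t => coneCutoff x₀ r x t * (∂ₜ v x t * ∂ₓ i v x t)
  have hχ : ContDiffOn ℝ 1 ↿(coneCutoff x₀ r) ℍ := (contDiff_coneCutoff x₀ r).contDiffOn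
  have hF : ContDiffOn ℝ 1 ↿F ℍ := hχ.mul (contDiffOn_energyDensity W.contDiffOn)
  have hJ : ∀ i, ContDiffOn ℝ 1 ↿(J i) ℍ := fun i =>
    hχ.mul ((contDiffOn_partialDeriv W.contDiffOn le_rfl _).mul
      (contDiffOn_partialDeriv W.contDiffOn le_rfl _))
  have hFs : SpatiallyCompact F :=
    (spatiallyCompact_coneCutoff x₀ r).mono fun x t h => by simp [F, h]
  have hJs : ∀ i, SpatiallyCompact (J i) := fun i =>
    (spatiallyCompact_coneCutoff x₀ r).mono fun x t h => by simp [J, h]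
  have hFi : Integrable fun x => F x t := hFs.integrable hF.continuousOn ht.le
  have hFi' : Integrable fun x => ∂ₜ F x t :=
    (hFs.partialDeriv _).integrable (continuousOn_partialDeriv hF _) ht.le
  have hJi : ∀ i ∈ Finset.univ, Integrable fun x => ∂ₓ i (J i) x t := fun i _ =>
    ((hJs i).partialDeriv _).integrable (continuousOn_partialDeriv (hJ i) _) ht.le
  calc ∫ x, ∂ₜ F x t = ∫ x, (∂ₜ F x t - ∑ i, ∂ₓ i (J i) x t) := by
        rw [integral_sub hFi' (integrable_finsetSum _ hJi), integral_finsetSum _ hJi,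
          Finset.sum_eq_zero fun i _ => integral_spaceDeriv_eq_zero (hJs i) (hJ i) ht.le i,
          sub_zero]
    _ ≤ ∫ x, (1 + |c|) * F x t :=
        integral_mono (hFi'.sub (integrable_finsetSum _ hJi)) (hFi.const_mul _) fun x =>
          W.timeDeriv_cutoff_energyDensity_le x ht hr
    _ = (1 + |c|) * ∫ x, F x t := integral_const_mul _ _

theorem energyDensity_zero (W : KleinGordon c f k v) (hf : f =ᶠ[𝓝 x] 0) (hk : k x = 0) :
    energyDensity v x 0 = 0 := by
  have hx : ∀ i, ∂ₓ i v x 0 = 0 := fun i => by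
    have h : (fun z => v z 0) =ᶠ[𝓝 x] 0 := by simpa only [W.init] using hf
    rw [spaceDeriv, ← fderiv_slice_apply (W.contDiffOn.of_le one_le_two) x le_rfl, h.fderiv_eq]
    simp
  simp [energyDensity, W.init, W.init_timeDeriv, hx, hk, hf.eq_of_nhds]

theorem eq_zero_of_ball (W : KleinGordon c f k v) (hf : EqOn f 0 (ball x₀ r))
    (hk : EqOn k 0 (ball x₀ r)) (ht : 0 ≤ t) (hr : t < r) : v x₀ t = 0 := by
  set F : 𝔼 → ℝ → ℝ := fun x t => coneCutoff x₀ r x t * energyDensity v x t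
  have hF : ContDiffOn ℝ 1 ↿F ℍ :=
    (contDiff_coneCutoff x₀ r).contDiffOn.mul (contDiffOn_energyDensity W.contDiffOn)
  have hFs : SpatiallyCompact F :=
    (spatiallyCompact_coneCutoff x₀ r).mono fun x t h => by simp [F, h]
  have h0 : ∀ x, F x 0 = 0 := fun x => by
    by_cases hx : x ∈ ball x₀ r
    · simp [F, W.energyDensity_zero (hf.eventuallyEq_of_mem (isOpen_ball.mem_nhds hx)) (hk hx)]
    · simp [F, coneCutoff_eq_zero (ht.trans hr.le) (by simpa [dist_eq_norm] using hx)]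
  have hle : ∫ x, F x t ≤ 0 :=
    nonpos_of_hasDerivAt_le_mul ht (hFs.continuousOn_integral hF.continuousOn t)
      (fun s hs => hFs.hasDerivAt_integral (hFs.partialDeriv _) hF.continuousOn
        (continuousOn_partialDeriv hF _) (fun x s hs => hasDerivAt_timeDeriv hF x hs) hs.1)
      (fun s hs => W.integral_timeDeriv_cutoff_energyDensity_le hs.1 (hs.2.trans hr).le)
      (by simp [h0])
  by_contra hne
  refine hle.not_gt ((continuous_slice hF.continuousOn
    ht).integral_pos_of_hasCompactSupport_nonneg_nonzero (hFs.hasCompactSupport ht)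
    (fun x => mul_nonneg (coneCutoff_nonneg _ _ _ _) (energyDensity_nonneg _ _ _)) (x := x₀)
    (mul_pos (coneCutoff_pos hr) ?_).ne')
  unfold energyDensity
  positivity

theorem spatiallyCompact (W : KleinGordon c f k v) (hf : HasCompactSupport f)
    (hk : HasCompactSupport k) : SpatiallyCompact v := by
  obtain ⟨R, hR⟩ := (hf.isCompact.union hk.isCompact).isBounded.subset_closedBall 0
  have hzero : ∀ y, R < ‖y‖ → f y = 0 ∧ k y = 0 := fun y hy => by
    have hy' : y ∉ tsupport f ∪ tsupport k := fun h => hy.not_ge (mem_closedBall_zero_iff.1 (hR h))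
    rw [mem_union, not_or] at hy'
    exact ⟨image_eq_zero_of_notMem_tsupport hy'.1, image_eq_zero_of_notMem_tsupport hy'.2⟩
  refine fun T => ⟨closedBall 0 (R + T), isCompact_closedBall _ _, fun x hx t ht => ?_⟩
  rw [mem_closedBall_zero_iff, not_le] at hx
  have hball : ∀ y ∈ ball x (‖x‖ - R), R < ‖y‖ := fun y hy => by
    rw [mem_ball, dist_comm, dist_eq_norm] at hy
    linarith [norm_sub_norm_le x y]
  exact W.eq_zero_of_ball (fun y hy => (hzero y (hball y hy)).1)
    (fun y hy => (hzero y (hball y hy)).2) ht.1 (by linarith [ht.2])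

end KleinGordon

/-! ### The Fourier–Laplace transform -/

/-- The `i`-th complex frequency `ηᵢ - i ξᵢ`. -/
def freq (ξ η : 𝔼) (i : Fin n) : ℂ := η i - ξ i * Complex.I

/-- The sum of squares of the complex frequencies. -/
def freqSq (ξ η : 𝔼) : ℂ := ∑ i, freq ξ η i ^ 2

/-- The complex exponential `x ↦ exp (⟨η, x⟩ - i ⟨ξ, x⟩)`. -/
def planeWave (ξ η x : 𝔼) : ℂ := Complex.exp (inner ℝ η x - inner ℝ ξ x * Complex.I)

/-- The Fourier–Laplace transform. -/
def fourierLaplace (ψ : 𝔼 → ℝ) (ξ η : 𝔼) : ℂ := ∫ x, ψ x • planeWave ξ η x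

theorem contDiff_planeWave (ξ η : 𝔼) {k : WithTop ℕ∞} : ContDiff ℝ k (planeWave ξ η) := by
  unfold planeWave
  have h : ∀ v : 𝔼, ContDiff ℝ k fun x : 𝔼 => ((inner ℝ v x : ℝ) : ℂ) := fun v =>
    Complex.ofRealCLM.contDiff.comp (contDiff_const.inner ℝ contDiff_id)
  exact ((h η).sub ((h ξ).mul contDiff_const)).cexp

theorem continuous_planeWave (ξ η : 𝔼) : Continuous (planeWave ξ η) :=
  (contDiff_planeWave ξ η (k := 1)).continuous

theorem fderiv_planeWave (ξ η x : 𝔼) (i : Fin n) :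
    fderiv ℝ (planeWave ξ η) x (𝐞 i) =
      freq ξ η i * planeWave ξ η x := by
  have h : ∀ v : 𝔼, HasFDerivAt (fun x : 𝔼 => ((inner ℝ v x : ℝ) : ℂ))
      (Complex.ofRealCLM.comp (innerSL ℝ v)) x := fun v =>
    Complex.ofRealCLM.hasFDerivAt.comp x (innerSL ℝ v).hasFDerivAt
  have h2 : HasFDerivAt (planeWave ξ η) _ x := ((h η).fun_sub ((h ξ).mul_const Complex.I)).cexp
  rw [h2.fderiv]
  simp only [smul_apply, sub_apply, ContinuousLinearMap.comp_apply, coe_innerSL_apply,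
    EuclideanSpace.inner_single_right, ringHom_apply, one_mul, Complex.ofRealCLM_apply,
    smul_eq_mul, freq, planeWave]
  ring

theorem integrable_smul_planeWave {ψ : 𝔼 → ℝ} (h : Continuous ψ) (hc : HasCompactSupport ψ)
    (ξ η : 𝔼) : Integrable fun x => ψ x • planeWave ξ η x :=
  (h.smul (continuous_planeWave ξ η)).integrable_of_hasCompactSupport hc.smul_right

theorem fourierLaplace_add {ψ χ : 𝔼 → ℝ} (h : Continuous ψ) (hc : HasCompactSupport ψ)
    (h' : Continuous χ) (hc' : HasCompactSupport χ) (ξ η : 𝔼) :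
    fourierLaplace (fun x => ψ x + χ x) ξ η = fourierLaplace ψ ξ η + fourierLaplace χ ξ η := by
  unfold fourierLaplace
  rw [← integral_add (integrable_smul_planeWave h hc ξ η) (integrable_smul_planeWave h' hc' ξ η)]
  simp_rw [add_smul]

theorem fourierLaplace_const_mul (c : ℝ) (ψ : 𝔼 → ℝ) (ξ η : 𝔼) :
    fourierLaplace (fun x => c * ψ x) ξ η = c * fourierLaplace ψ ξ η := by
  unfold fourierLaplace
  simp_rw [mul_smul]
  rw [integral_smul]
  simp

theorem fourierLaplace_sum {ψ : Fin n → 𝔼 → ℝ} (h : ∀ i, Continuous (ψ i))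
    (hc : ∀ i, HasCompactSupport (ψ i)) (ξ η : 𝔼) :
    fourierLaplace (fun x => ∑ i, ψ i x) ξ η = ∑ i, fourierLaplace (ψ i) ξ η := by
  unfold fourierLaplace
  rw [← integral_finsetSum _ fun i _ => integrable_smul_planeWave (h i) (hc i) ξ η]
  simp_rw [Finset.sum_smul]

theorem fourierLaplace_fderiv {ψ : 𝔼 → ℝ} (h : ContDiff ℝ 1 ψ) (hc : HasCompactSupport ψ)
    (ξ η : 𝔼) (i : Fin n) :
    fourierLaplace (fun x => fderiv ℝ ψ x (𝐞 i)) ξ η =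
      -freq ξ η i * fourierLaplace ψ ξ η := by
  have := integral_smul_fderiv_of_compact h hc (contDiff_planeWave ξ η)
    (𝐞 i)
  simp_rw [fderiv_planeWave] at this
  unfold fourierLaplace
  rw [← neg_inj, ← this, ← integral_const_mul, ← integral_neg]
  congr 1 with x
  simp only [Complex.real_smul, neg_mul, neg_neg]
  ring

section Transform

variable {v w h : EuclideanSpace ℝ (Fin n) → ℝ → ℝ} {t : ℝ}

theorem fourierLaplace_spaceDeriv (hv : ContDiffOn ℝ 1 ↿v ℍ) (hs : SpatiallyCompact v)
    (ht : 0 ≤ t) (ξ η : 𝔼) (i : Fin n) :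
    fourierLaplace (fun x => ∂ₓ i v x t) ξ η =
      -freq ξ η i * fourierLaplace (fun x => v x t) ξ η := by
  rw [← fourierLaplace_fderiv (contDiff_slice hv ht) (hs.hasCompactSupport ht)]
  simp_rw [fderiv_slice_apply hv _ ht, spaceDeriv]

theorem fourierLaplace_spaceDeriv_spaceDeriv (hv : ContDiffOn ℝ 2 ↿v ℍ) (hs : SpatiallyCompact v)
    (ht : 0 ≤ t) (ξ η : 𝔼) (i : Fin n) :
    fourierLaplace (fun x => ∂ₓ i (∂ₓ i v) x t) ξ η =
      freq ξ η i ^ 2 * fourierLaplace (fun x => v x t) ξ η := by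
  rw [fourierLaplace_spaceDeriv (v := ∂ₓ i v) (contDiffOn_partialDeriv hv le_rfl _)
      (hs.partialDeriv _) ht,
    fourierLaplace_spaceDeriv (hv.of_le one_le_two) hs ht]
  ring

theorem fourierLaplace_laplacian (hv : ContDiffOn ℝ 2 ↿v ℍ) (hs : SpatiallyCompact v)
    (ht : 0 ≤ t) (ξ η : 𝔼) :
    fourierLaplace (fun x => ∑ i, ∂ₓ i (∂ₓ i v) x t) ξ η =
      freqSq ξ η * fourierLaplace (fun x => v x t) ξ η := by
  rw [fourierLaplace_sum (fun i => continuous_slice (F := ∂ₓ i (∂ₓ i v))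
      (continuousOn_partialDeriv (contDiffOn_partialDeriv hv le_rfl _) _) ht)
    fun i => ((hs.partialDeriv _).partialDeriv _).hasCompactSupport ht, freqSq, Finset.sum_mul]
  exact Finset.sum_congr rfl fun i _ => fourierLaplace_spaceDeriv_spaceDeriv hv hs ht ξ η i

theorem hasCompactSupport_sum {ι : Type*} [Fintype ι] {a : ι → 𝔼 → ℝ}
    (h : ∀ i, HasCompactSupport (a i)) : HasCompactSupport fun x => ∑ i, a i x :=
  HasCompactSupport.intro (isCompact_iUnion h) fun x hx => by
    rw [mem_iUnion, not_exists] at hx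
    exact Finset.sum_eq_zero fun i _ => image_eq_zero_of_notMem_tsupport (hx i)

theorem hasDerivAt_fourierLaplace (hv : ContDiffOn ℝ 1 ↿v ℍ) (hs : SpatiallyCompact v)
    (ht : 0 < t) (ξ η : 𝔼) :
    HasDerivAt (fun s => fourierLaplace (fun x => v x s) ξ η)
      (fourierLaplace (fun x => ∂ₜ v x t) ξ η) t := by
  have hp : Continuous fun p : 𝔼 × ℝ => planeWave ξ η p.1 :=
    (continuous_planeWave ξ η).comp continuous_fst
  exact SpatiallyCompact.hasDerivAt_integral (F := fun x s => v x s • planeWave ξ η x)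
    (F' := fun x s => ∂ₜ v x s • planeWave ξ η x)
    (hs.mono fun x s h => by simp [h]) ((hs.partialDeriv (0, 1)).mono fun x s h => by
      simp [timeDeriv, h]) (hv.continuousOn.smul hp.continuousOn)
    ((continuousOn_partialDeriv hv (0, 1)).smul hp.continuousOn)
    (fun x s hs => (hasDerivAt_timeDeriv hv x hs).smul_const _) ht

theorem continuousOn_fourierLaplace (hv : ContinuousOn ↿v ℍ) (hs : SpatiallyCompact v) (T : ℝ)
    (ξ η : 𝔼) : ContinuousOn (fun s => fourierLaplace (fun x => v x s) ξ η) (Icc 0 T) :=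
  SpatiallyCompact.continuousOn_integral (F := fun x s => v x s • planeWave ξ η x)
    (hs.mono fun x s h => by simp [h])
    (hv.smul ((continuous_planeWave ξ η).comp continuous_fst).continuousOn) T

theorem hasDerivAt_fourierLaplace_timeDeriv {c : ℝ} (hw : ContDiffOn ℝ 2 ↿w ℍ)
    (hs : SpatiallyCompact w) (hh : ContinuousOn ↿h ℍ) (hhs : SpatiallyCompact h)
    (hpde : ∀ x t, 0 < t → ∂ₜ (∂ₜ w) x t = ∑ i, ∂ₓ i (∂ₓ i w) x t + c * w x t + h x t)
    (ht : 0 < t) (ξ η : 𝔼) :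
    HasDerivAt (fun s => fourierLaplace (fun x => ∂ₜ w x s) ξ η)
      ((c + freqSq ξ η) * fourierLaplace (fun x => w x t) ξ η +
        fourierLaplace (fun x => h x t) ξ η) t := by
  have hlap : Continuous fun x => ∑ i, ∂ₓ i (∂ₓ i w) x t :=
    continuous_finsetSum _ fun i _ => continuous_slice (F := ∂ₓ i (∂ₓ i w))
      (continuousOn_partialDeriv (contDiffOn_partialDeriv hw le_rfl _) _) ht.le
  have hlaps : HasCompactSupport fun x => ∑ i, ∂ₓ i (∂ₓ i w) x t :=
    hasCompactSupport_sum fun _ => ((hs.partialDeriv _).partialDeriv _).hasCompactSupport ht.le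
  have hwt : Continuous fun x => c * w x t :=
    continuous_const.mul (continuous_slice hw.continuousOn ht.le)
  have hwts : HasCompactSupport fun x => c * w x t := (hs.hasCompactSupport ht.le).mul_left
  refine (hasDerivAt_fourierLaplace (v := ∂ₜ w) (contDiffOn_partialDeriv hw le_rfl _)
    (hs.partialDeriv _) ht ξ η).congr_deriv ?_
  simp_rw [hpde _ t ht]
  rw [fourierLaplace_add (ψ := fun x => ∑ i, ∂ₓ i (∂ₓ i w) x t + c * w x t)
    (hlap.add hwt) (hlaps.add hwts) (continuous_slice hh ht.le)
    (hhs.hasCompactSupport ht.le), fourierLaplace_add hlap hlaps hwt hwts,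
    fourierLaplace_const_mul, fourierLaplace_laplacian hw hs ht.le]
  ring

theorem contDiffOn_coord {k : WithTop ℕ∞} (j : Fin n) :
    ContDiffOn ℝ k ↿(fun (x : 𝔼) (_ : ℝ) => x j) ℍ :=
  ((EuclideanSpace.proj j : 𝔼 →L[ℝ] ℝ).contDiff.comp contDiff_fst).contDiffOn

theorem KleinGordon.hasDerivAt_fourierLaplace_timeDeriv {c : ℝ} {f k : 𝔼 → ℝ}
    (W : KleinGordon c f k v) (hs : SpatiallyCompact v) (ht : 0 < t) (ξ η : 𝔼) :
    HasDerivAt (fun s => fourierLaplace (fun x => ∂ₜ v x s) ξ η)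
      ((c + freqSq ξ η) * fourierLaplace (fun x => v x t) ξ η) t := by
  have h := _root_.hasDerivAt_fourierLaplace_timeDeriv (h := fun _ _ => 0) W.contDiffOn hs
    continuousOn_const (hs.mono fun _ _ _ => rfl) (by simpa using W.pde) ht ξ η
  simpa [fourierLaplace] using h

theorem partialDeriv_coord_mul (hv : ContDiffOn ℝ 1 ↿v ℍ) (j : Fin n) (V : 𝔼 × ℝ) (x : 𝔼)
    (ht : 0 ≤ t) : partialDeriv V (fun x t => x j * v x t) x t =
      x j * partialDeriv V v x t + V.1 j * v x t := by
  have hcoord : HasFDerivAt (fun p : 𝔼 × ℝ => p.1 j)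
      ((EuclideanSpace.proj j : 𝔼 →L[ℝ] ℝ).comp (ContinuousLinearMap.fst ℝ 𝔼 ℝ)) (x, t) :=
    ((EuclideanSpace.proj j : 𝔼 →L[ℝ] ℝ).comp (ContinuousLinearMap.fst ℝ 𝔼 ℝ)).hasFDerivAt
  have hV : partialDeriv V (fun x _ => x j) x t = V.1 j :=
    congrArg (fun L : 𝔼 × ℝ →L[ℝ] ℝ => L V) <|
      hcoord.hasFDerivWithinAt.fderivWithin (uniqueDiffOn_halfSpace _ ⟨mem_univ x, ht⟩)
  rw [partialDeriv_mul (contDiffOn_coord j) hv V x ht, hV, add_comm]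

end Transform

/-- `cosh (t s)`, the solution of `y'' = s² y`, `y(0) = 1`, `y'(0) = 0`. -/
def propC (s : ℂ) (t : ℝ) : ℂ := Complex.cosh (t * s)

/-- `sinh (t s) / s`, the solution of `y'' = s² y`, `y(0) = 0`, `y'(0) = 1`. -/
def propS (s : ℂ) (t : ℝ) : ℂ := if s = 0 then (t : ℂ) else Complex.sinh (t * s) / s

theorem hasDerivAt_propC (s : ℂ) (t : ℝ) : HasDerivAt (propC s) (s ^ 2 * propS s t) t := by
  have h1 : HasDerivAt (fun t : ℝ => (t : ℂ) * s) s t := by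
    simpa using (hasDerivAt_id t).ofReal_comp.mul_const s
  refine ((Complex.hasDerivAt_cosh _).comp t h1).congr_deriv ?_
  unfold propS
  split_ifs with h
  · simp [h]
  · field_simp

theorem hasDerivAt_propS (s : ℂ) (t : ℝ) : HasDerivAt (propS s) (propC s t) t := by
  unfold propS propC
  by_cases h : s = 0
  · simpa [h] using (hasDerivAt_id t).ofReal_comp
  · have h1 : HasDerivAt (fun t : ℝ => (t : ℂ) * s) s t := by
      simpa using (hasDerivAt_id t).ofReal_comp.mul_const s
    simp only [h, if_false]
    refine (((Complex.hasDerivAt_sinh _).comp t h1).div_const s).congr_deriv ?_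
    field_simp

theorem propC_sq_sub (s : ℂ) (t : ℝ) : propC s t ^ 2 - s ^ 2 * propS s t ^ 2 = 1 := by
  unfold propC propS
  split_ifs with h
  · simp [h]
  · rw [div_pow, mul_div_cancel₀ _ (pow_ne_zero 2 h)]
    exact Complex.cosh_sq_sub_sinh_sq _

theorem eq_of_hasDerivAt_zero {A : ℝ → ℂ} {t : ℝ} (ht : 0 ≤ t) (hc : ContinuousOn A (Icc 0 t))
    (h : ∀ s ∈ Ioo 0 t, HasDerivAt A 0 s) : A t = A 0 := by
  rcases ht.eq_or_lt with rfl | ht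
  · rfl
  have h1 : ∀ ε ∈ Ioo 0 t, A t = A ε := fun ε hε =>
    (constant_of_has_deriv_right_zero (hc.mono (Icc_subset_Icc_left hε.1.le))
      (fun x hx => (h x ⟨hε.1.trans_le hx.1, hx.2⟩).hasDerivWithinAt) t ⟨hε.2.le, le_rfl⟩)
  have h2 : Tendsto A (𝓝[Ioo 0 t] 0) (𝓝 (A 0)) :=
    (hc 0 ⟨le_rfl, ht.le⟩).mono_left (nhdsWithin_mono _ Ioo_subset_Icc_self)
  have h3 : Tendsto A (𝓝[Ioo 0 t] 0) (𝓝 (A t)) :=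
    tendsto_const_nhds.congr' (eventually_nhdsWithin_of_forall h1)
  have : (𝓝[Ioo 0 t] (0 : ℝ)).NeBot := by
    rw [nhdsWithin_Ioo_eq_nhdsGT ht]; infer_instance
  exact tendsto_nhds_unique h3 h2

theorem eq_prop_of_ode {Y Y' : ℝ → ℂ} {s : ℂ} (hY : ∀ T, ContinuousOn Y (Icc 0 T))
    (hY' : ∀ T, ContinuousOn Y' (Icc 0 T)) (h1 : ∀ t, 0 < t → HasDerivAt Y (Y' t) t)
    (h2 : ∀ t, 0 < t → HasDerivAt Y' (s ^ 2 * Y t) t) {t : ℝ} (ht : 0 ≤ t) :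
    Y t = propC s t * Y 0 + propS s t * Y' 0 ∧
      Y' t = propC s t * Y' 0 + propS s t * (s ^ 2 * Y 0) := by
  have hC : Continuous (propC s) :=
    continuous_iff_continuousAt.2 fun t => (hasDerivAt_propC s t).continuousAt
  have hS : Continuous (propS s) :=
    continuous_iff_continuousAt.2 fun t => (hasDerivAt_propS s t).continuousAt
  have hA : propC s t * Y t - propS s t * Y' t = propC s 0 * Y 0 - propS s 0 * Y' 0 := by
    refine eq_of_hasDerivAt_zero (A := fun t => propC s t * Y t - propS s t * Y' t) ht
      ((hC.continuousOn.mul (hY t)).sub (hS.continuousOn.mul (hY' t))) fun r hr => ?_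
    exact (((hasDerivAt_propC s r).mul (h1 r hr.1)).sub
      ((hasDerivAt_propS s r).mul (h2 r hr.1))).congr_deriv (by ring)
  have hB : propC s t * Y' t - s ^ 2 * propS s t * Y t =
      propC s 0 * Y' 0 - s ^ 2 * propS s 0 * Y 0 := by
    refine eq_of_hasDerivAt_zero (A := fun t => propC s t * Y' t - s ^ 2 * propS s t * Y t) ht
      ((hC.continuousOn.mul (hY' t)).sub ((continuousOn_const.mul hS.continuousOn).mul (hY t)))
      fun r hr => ?_
    exact (((hasDerivAt_propC s r).mul (h2 r hr.1)).sub
      (((hasDerivAt_propS s r).const_mul (s ^ 2)).mul (h1 r hr.1))).congr_deriv (by ring)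
  have hC0 : propC s 0 = 1 := by simp [propC]
  have hS0 : propS s 0 = 0 := by simp [propS]
  rw [hC0, hS0] at hA hB
  have h := propC_sq_sub s t
  constructor
  · linear_combination propC s t * hA + propS s t * hB - Y t * h
  · linear_combination propC s t * hB + s ^ 2 * propS s t * hA - Y' t * h

theorem eq_prop_of_resonant_ode {V V' X X' : ℝ → ℂ} {s κ : ℂ}
    (hVc : ∀ T, ContinuousOn V (Icc 0 T)) (hVc' : ∀ T, ContinuousOn V' (Icc 0 T))
    (hXc : ∀ T, ContinuousOn X (Icc 0 T)) (hXc' : ∀ T, ContinuousOn X' (Icc 0 T))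
    (hV : ∀ t, 0 < t → HasDerivAt V (V' t) t)
    (hV' : ∀ t, 0 < t → HasDerivAt V' (s ^ 2 * V t) t)
    (hX : ∀ t, 0 < t → HasDerivAt X (X' t) t)
    (hX' : ∀ t, 0 < t → HasDerivAt X' (s ^ 2 * X t + 2 * κ * V t) t) {t : ℝ} (ht : 0 ≤ t) :
    t * (-κ * V t) + X' t = propC s t * X' 0 + propS s t * (κ * V 0 + s ^ 2 * X 0) := by
  have hid : ∀ t : ℝ, HasDerivAt (fun t : ℝ => (t : ℂ)) 1 t := fun t =>
    (hasDerivAt_id t).ofReal_comp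
  have hidc : ∀ T, ContinuousOn (fun t : ℝ => (t : ℂ)) (Icc 0 T) := fun _ =>
    Complex.continuous_ofReal.continuousOn
  have h := (eq_prop_of_ode (s := s) (Y := fun t => t * (-κ * V t) + X' t)
    (Y' := fun t => κ * V t + t * (-κ * V' t) + s ^ 2 * X t)
    (fun T => ((hidc T).mul (continuousOn_const.mul (hVc T))).add (hXc' T))
    (fun T => ((continuousOn_const.mul (hVc T)).add
      ((hidc T).mul (continuousOn_const.mul (hVc' T)))).add (continuousOn_const.mul (hXc T)))
    (fun t ht => (((hid t).fun_mul ((hV t ht).const_mul _)).fun_add (hX' t ht)).congr_deriv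
      (by ring))
    (fun t ht => ((((hV t ht).const_mul _).fun_add
      ((hid t).fun_mul ((hV' t ht).const_mul _))).fun_add ((hX t ht).const_mul _)).congr_deriv
      (by ring)) ht).1
  simpa using h

/-- A square root of `1/4 + freqSq`, by the principal branch. -/
def symb (ξ η : 𝔼) : ℂ := (1 / 4 + freqSq ξ η) ^ (1 / 2 : ℂ)

theorem symb_sq (ξ η : 𝔼) : symb ξ η ^ 2 = 1 / 4 + freqSq ξ η := by
  unfold symb
  rw [← Complex.cpow_nat_mul]
  norm_num

/-- The solution of `y'' = symb² y`, `y(0) = A`, `y'(0) = B` at time `t`. -/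
def propagate (A B : 𝔼 → 𝔼 → ℂ) (t : ℝ) (ξ η : 𝔼) : ℂ :=
  propC (symb ξ η) t * A ξ η + propS (symb ξ η) t * B ξ η

/-- The Fourier–Laplace transform of `a` solves `y'' = symb² y` with the data `A`, `B`. -/
def HasAmplitude (a : 𝔼 → ℝ → ℝ) (A B : 𝔼 → 𝔼 → ℂ) : Prop :=
  ∀ t, 0 < t → ∀ ξ η, fourierLaplace (fun x => a x t) ξ η = propagate A B t ξ η

theorem HasAmplitude.fderiv_apply {a : 𝔼 → ℝ → ℝ} {A B : 𝔼 → 𝔼 → ℂ} (h : HasAmplitude a A B)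
    (ha : ∀ t, 0 < t → ContDiff ℝ 1 fun x => a x t)
    (hc : ∀ t, 0 < t → HasCompactSupport fun x => a x t) (k : Fin n) :
    HasAmplitude (fun x t => fderiv ℝ (fun z => a z t) x (𝐞 k))
      (fun ξ η => -freq ξ η k * A ξ η) (fun ξ η => -freq ξ η k * B ξ η) := by
  intro t ht ξ η
  rw [fourierLaplace_fderiv (ha t ht) (hc t ht), propagate]
  unfold HasAmplitude propagate at h
  linear_combination (-freq ξ η k) * h t ht ξ η

namespace KleinGordon

variable {c : ℝ} {f k : EuclideanSpace ℝ (Fin n) → ℝ} {v : EuclideanSpace ℝ (Fin n) → ℝ → ℝ}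
  {j : Fin n} {t : ℝ}

theorem timeDeriv_timeDeriv_coord_mul (W : KleinGordon c f k v) (j : Fin n) (x : 𝔼) (ht : 0 < t) :
    ∂ₜ (∂ₜ fun x t => x j * v x t) x t = ∑ i, ∂ₓ i (∂ₓ i fun x t => x j * v x t) x t +
      c * (x j * v x t) + -2 * ∂ₓ j v x t := by
  have hv := W.contDiffOn.of_le one_le_two
  have hsnd : ∀ V : 𝔼 × ℝ, partialDeriv V (partialDeriv V fun x t => x j * v x t) x t =
      2 * (V.1 j * partialDeriv V v x t) + x j * partialDeriv V (partialDeriv V v) x t := by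
    intro V
    have hDv : ContDiffOn ℝ 1 ↿(partialDeriv V v) ℍ := contDiffOn_partialDeriv W.contDiffOn le_rfl V
    rw [partialDeriv_congr (fun x s hs => partialDeriv_coord_mul hv j V x hs) V x ht.le,
      partialDeriv_add_const_mul _ ((contDiffOn_coord j).mul hDv) hv V x ht.le,
      partialDeriv_coord_mul hDv j V x ht.le]
    ring
  have htime : ∂ₜ (∂ₜ fun x t => x j * v x t) x t = x j * ∂ₜ (∂ₜ v) x t := by
    simpa [timeDeriv] using hsnd (0, 1)
  have hspace : ∀ i, ∂ₓ i (∂ₓ i fun x t => x j * v x t) x t =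
      (if j = i then 2 * ∂ₓ i v x t else 0) + x j * ∂ₓ i (∂ₓ i v) x t := fun i => by
    simpa [spaceDeriv, Pi.single_apply] using hsnd (𝐞 i, 0)
  rw [htime, W.pde x t ht, Finset.sum_congr rfl fun i _ => hspace i, Finset.sum_add_distrib,
    Finset.sum_ite_eq, if_pos (Finset.mem_univ j), ← Finset.mul_sum]
  ring

theorem contDiffOn_coord_mul (W : KleinGordon c f k v) (j : Fin n) :
    ContDiffOn ℝ 2 ↿(fun x t => x j * v x t) ℍ :=
  (contDiffOn_coord j).mul W.contDiffOn

theorem fourierLaplace_eq (W : KleinGordon (1 / 4) f k v) (hs : SpatiallyCompact v) (ht : 0 ≤ t)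
    (ξ η : 𝔼) :
    fourierLaplace (fun x => v x t) ξ η =
        propC (symb ξ η) t * fourierLaplace f ξ η + propS (symb ξ η) t * fourierLaplace k ξ η ∧
      fourierLaplace (fun x => ∂ₜ v x t) ξ η =
        propC (symb ξ η) t * fourierLaplace k ξ η +
          propS (symb ξ η) t * ((1 / 4 + freqSq ξ η) * fourierLaplace f ξ η) := by
  have hv := W.contDiffOn.of_le one_le_two
  have hode := eq_prop_of_ode (s := symb ξ η) (continuousOn_fourierLaplace hv.continuousOn hs · ξ η)
    (continuousOn_fourierLaplace (continuousOn_partialDeriv hv _) (hs.partialDeriv _) · ξ η)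
    (fun t ht => hasDerivAt_fourierLaplace hv hs ht ξ η)
    (fun t ht => (W.hasDerivAt_fourierLaplace_timeDeriv hs ht ξ η).congr_deriv (by simp [symb_sq]))
    ht
  simpa [W.init, W.init_timeDeriv, symb_sq, ← timeDeriv.eq_def] using hode

theorem hasAmplitude (W : KleinGordon (1 / 4) f k v) (hs : SpatiallyCompact v) :
    HasAmplitude v (fourierLaplace f) (fourierLaplace k) :=
  fun _ ht ξ η => (W.fourierLaplace_eq hs ht.le ξ η).1

theorem hasAmplitude_timeDeriv (W : KleinGordon (1 / 4) f k v) (hs : SpatiallyCompact v) :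
    HasAmplitude (∂ₜ v) (fourierLaplace k)
      fun ξ η => (1 / 4 + freqSq ξ η) * fourierLaplace f ξ η :=
  fun _ ht ξ η => (W.fourierLaplace_eq hs ht.le ξ η).2

theorem timeDeriv_coord_mul (W : KleinGordon c f k v) (j : Fin n) (x : 𝔼) (ht : 0 ≤ t) :
    ∂ₜ (fun x t => x j * v x t) x t = x j * ∂ₜ v x t := by
  simpa [timeDeriv] using
    partialDeriv_coord_mul (W.contDiffOn.of_le one_le_two) j (0, 1) x ht

theorem fourierLaplace_boost (W : KleinGordon c f k v) (hs : SpatiallyCompact v)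
    (j : Fin n) (ht : 0 ≤ t) (ξ η : 𝔼) :
    fourierLaplace (fun x => t * ∂ₓ j v x t + x j * ∂ₜ v x t) ξ η =
      t * (-freq ξ η j * fourierLaplace (fun x => v x t) ξ η) +
        fourierLaplace (fun x => x j * ∂ₜ v x t) ξ η := by
  have hv := W.contDiffOn.of_le one_le_two
  rw [fourierLaplace_add (ψ := fun x => t * ∂ₓ j v x t) (χ := fun x => x j * ∂ₜ v x t)
      (continuous_const.mul (continuous_slice (F := ∂ₓ j v) (continuousOn_partialDeriv hv _) ht))
      ((hs.partialDeriv _).hasCompactSupport ht).mul_left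
      ((EuclideanSpace.proj j : 𝔼 →L[ℝ] ℝ).continuous.mul
        (continuous_slice (F := ∂ₜ v) (continuousOn_partialDeriv hv _) ht))
      ((hs.partialDeriv _).hasCompactSupport ht).mul_left,
    fourierLaplace_const_mul, fourierLaplace_spaceDeriv hv hs ht]

theorem hasDerivAt_fourierLaplace_timeDeriv_coord_mul (W : KleinGordon c f k v)
    (hs : SpatiallyCompact v) (ht : 0 < t) (ξ η : 𝔼) :
    HasDerivAt (fun t => fourierLaplace (fun x => ∂ₜ (fun x t => x j * v x t) x t) ξ η)
      ((c + freqSq ξ η) * fourierLaplace (fun x => x j * v x t) ξ η +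
        2 * freq ξ η j * fourierLaplace (fun x => v x t) ξ η) t := by
  have hv := W.contDiffOn.of_le one_le_two
  refine (_root_.hasDerivAt_fourierLaplace_timeDeriv (h := fun x t => -2 * ∂ₓ j v x t)
    (W.contDiffOn_coord_mul j) (hs.mono fun x t h => by simp [h])
    ((continuousOn_partialDeriv hv (𝐞 j, 0)).const_smul (-2 : ℝ))
    ((hs.partialDeriv (𝐞 j, 0)).mono fun x t h => by simp [spaceDeriv, h])
    (fun x t ht => W.timeDeriv_timeDeriv_coord_mul j x ht) ht ξ η).congr_deriv ?_
  rw [fourierLaplace_const_mul, fourierLaplace_spaceDeriv hv hs ht.le]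
  push_cast
  ring

theorem hasAmplitude_boost (W : KleinGordon (1 / 4) f k v) (hs : SpatiallyCompact v)
    (j : Fin n) :
    HasAmplitude (fun x t => t * ∂ₓ j v x t + x j * ∂ₜ v x t)
      (fourierLaplace fun x => x j * k x)
      fun ξ η => freq ξ η j * fourierLaplace f ξ η +
        (1 / 4 + freqSq ξ η) * fourierLaplace (fun x => x j * f x) ξ η := by
  intro t ht ξ η
  have hv := W.contDiffOn.of_le one_le_two
  have hw := W.contDiffOn_coord_mul j
  have hw' := hw.of_le one_le_two
  have hws : SpatiallyCompact fun x t => x j * v x t := hs.mono fun x t h => by simp [h]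
  have hode := eq_prop_of_resonant_ode (s := symb ξ η) (κ := freq ξ η j)
    (continuousOn_fourierLaplace hv.continuousOn hs · ξ η)
    (continuousOn_fourierLaplace (continuousOn_partialDeriv hv _) (hs.partialDeriv _) · ξ η)
    (continuousOn_fourierLaplace hw.continuousOn hws · ξ η)
    (continuousOn_fourierLaplace (continuousOn_partialDeriv hw' _) (hws.partialDeriv _) · ξ η)
    (fun t ht => hasDerivAt_fourierLaplace hv hs ht ξ η)
    (fun t ht => (W.hasDerivAt_fourierLaplace_timeDeriv hs ht ξ η).congr_deriv (by simp [symb_sq]))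
    (fun t ht => hasDerivAt_fourierLaplace hw' hws ht ξ η)
    (fun t ht => (W.hasDerivAt_fourierLaplace_timeDeriv_coord_mul hs ht ξ η).congr_deriv
      (by simp [symb_sq])) ht.le
  simp only [← timeDeriv.eq_def, W.timeDeriv_coord_mul j _ ht.le,
    W.timeDeriv_coord_mul j _ le_rfl, W.init, W.init_timeDeriv, symb_sq] at hode
  exact (W.fourierLaplace_boost hs j ht.le ξ η).trans hode

end KleinGordon

theorem freqSq_re (ξ η : 𝔼) : (freqSq ξ η).re = ‖η‖ ^ 2 - ‖ξ‖ ^ 2 := by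
  rw [EuclideanSpace.real_norm_sq_eq, EuclideanSpace.real_norm_sq_eq, ← Finset.sum_sub_distrib,
    freqSq, Complex.re_sum]
  refine Finset.sum_congr rfl fun i _ => ?_
  simp [freq, pow_two, Complex.mul_re]

theorem freqSq_im (ξ η : 𝔼) : (freqSq ξ η).im = -2 * inner ℝ ξ η := by
  rw [PiLp.inner_apply, Finset.mul_sum, freqSq, Complex.im_sum]
  refine Finset.sum_congr rfl fun i _ => ?_
  simp only [freq, pow_two, Complex.mul_im, Complex.sub_re, Complex.ofReal_re, Complex.mul_re,
    Complex.I_re, mul_zero, Complex.ofReal_im, Complex.I_im, mul_one, sub_self, sub_zero,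
    Complex.sub_im, add_zero, zero_sub, mul_neg, neg_mul, RCLike.inner_apply, ringHom_apply]
  ring

theorem norm_freq_le (ξ η : 𝔼) (i : Fin n) : ‖freq ξ η i‖ ≤ ‖η‖ + ‖ξ‖ := by
  unfold freq
  refine (norm_sub_le _ _).trans (add_le_add ?_ ?_)
  · simpa using PiLp.norm_apply_le η i
  · simpa using PiLp.norm_apply_le ξ i

theorem norm_planeWave (ξ η x : 𝔼) : ‖planeWave ξ η x‖ = exp (inner ℝ η x) := by
  simp [planeWave, Complex.norm_exp]

theorem continuous_fourierLaplace {ψ : 𝔼 → ℝ} (h : Continuous ψ) (hc : HasCompactSupport ψ) :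
    Continuous fun p : 𝔼 × 𝔼 => fourierLaplace ψ p.1 p.2 := by
  have hcont : Continuous fun q : (𝔼 × 𝔼) × 𝔼 => ψ q.2 • planeWave q.1.1 q.1.2 q.2 := by
    unfold planeWave
    fun_prop
  refine (continuous_parametric_integral_of_continuous (μ := volume)
    (f := fun (p : 𝔼 × 𝔼) x => ψ x • planeWave p.1 p.2 x) hcont hc.isCompact).congr fun p =>
    setIntegral_eq_integral_of_forall_compl_eq_zero fun x hx => ?_
  rw [image_eq_zero_of_notMem_tsupport hx, zero_smul]

theorem norm_fourierLaplace_le {ψ : 𝔼 → ℝ} (h : Continuous ψ) (hc : HasCompactSupport ψ)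
    {ξ η : 𝔼} (hη : ‖η‖ ≤ 1) : ‖fourierLaplace ψ ξ η‖ ≤ ∫ x, |ψ x| * exp ‖x‖ := by
  refine norm_integral_le_of_norm_le ?_ (Eventually.of_forall fun x => ?_)
  · have hcont : Continuous fun x => |ψ x| * exp ‖x‖ := by fun_prop
    exact hcont.integrable_of_hasCompactSupport hc.abs.mul_right
  · rw [norm_smul, norm_planeWave, norm_eq_abs]
    gcongr
    calc inner ℝ η x ≤ ‖η‖ * ‖x‖ := real_inner_le_norm _ _
      _ ≤ 1 * ‖x‖ := by gcongr
      _ = ‖x‖ := one_mul _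

section Laplacian

variable {ψ : EuclideanSpace ℝ (Fin n) → ℝ} {k m : WithTop ℕ∞}

theorem contDiffOn_static (h : ContDiff ℝ k ψ) : ContDiffOn ℝ k ↿(fun x (_ : ℝ) => ψ x) ℍ :=
  (h.comp contDiff_fst).contDiffOn

theorem spatiallyCompact_static (hc : HasCompactSupport ψ) :
    SpatiallyCompact fun x (_ : ℝ) => ψ x :=
  fun _ => ⟨tsupport ψ, hc, fun _ hx _ _ => image_eq_zero_of_notMem_tsupport hx⟩

theorem lap_eq_sum_spaceDeriv (h : ContDiff ℝ 2 ψ) :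
    lap ψ = fun x => ∑ i, ∂ₓ i (∂ₓ i fun x _ => ψ x) x 0 :=
  funext fun x => lap_slice (contDiffOn_static h) x le_rfl

theorem contDiff_lap (h : ContDiff ℝ m ψ) (hkm : k + 2 ≤ m) : ContDiff ℝ k (lap ψ) := by
  rw [lap_eq_sum_spaceDeriv (h.of_le (le_add_self.trans hkm))]
  refine ContDiff.sum fun i _ => contDiff_slice (contDiffOn_partialDeriv
    (contDiffOn_partialDeriv (k := k + 1) (contDiffOn_static h) ?_ _) le_rfl _) le_rfl
  rwa [add_assoc, one_add_one_eq_two]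

theorem hasCompactSupport_lap (h : ContDiff ℝ 2 ψ) (hc : HasCompactSupport ψ) :
    HasCompactSupport (lap ψ) := by
  rw [lap_eq_sum_spaceDeriv h]
  exact hasCompactSupport_sum fun i =>
    (((spatiallyCompact_static hc).partialDeriv _).partialDeriv _).hasCompactSupport le_rfl

theorem fourierLaplace_lap (h : ContDiff ℝ 2 ψ) (hc : HasCompactSupport ψ) (ξ η : 𝔼) :
    fourierLaplace (lap ψ) ξ η = freqSq ξ η * fourierLaplace ψ ξ η := by
  rw [lap_eq_sum_spaceDeriv h]
  exact fourierLaplace_laplacian (contDiffOn_static h) (spatiallyCompact_static hc) le_rfl ξ η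

end Laplacian

theorem one_add_norm_sq_le (ξ : 𝔼) {η : 𝔼} (hη : ‖η‖ ≤ 1 / 4) :
    1 + ‖ξ‖ ^ 2 ≤ 2 * ‖1 - freqSq ξ η‖ := by
  have hre := Complex.re_le_norm (1 - freqSq ξ η)
  rw [Complex.sub_re, freqSq_re, Complex.one_re] at hre
  nlinarith [norm_nonneg η, sq_nonneg ‖ξ‖]

/-- Each application of `1 - Δ` gains a factor `1 - freqSq`, comparable to `1 + ‖ξ‖ ^ 2`. -/
theorem fourierLaplace_decay (N : ℕ) : ∀ {ψ : 𝔼 → ℝ}, ContDiff ℝ (⊤ : ℕ∞) ψ →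
    HasCompactSupport ψ →
    ∃ C, ∀ ξ η, ‖η‖ ≤ 1 / 4 → (1 + ‖ξ‖ ^ 2) ^ N * ‖fourierLaplace ψ ξ η‖ ≤ C := by
  induction N with
  | zero =>
    intro ψ h hc
    refine ⟨∫ x, |ψ x| * exp ‖x‖, fun ξ η hη => ?_⟩
    rw [pow_zero, one_mul]
    exact norm_fourierLaplace_le h.continuous hc (hη.trans (by norm_num))
  | succ N ih =>
    intro ψ h hc
    have h2 : ContDiff ℝ 2 ψ := contDiff_infty.1 h 2
    have hlap : ContDiff ℝ (⊤ : ℕ∞) (lap ψ) := contDiff_lap h le_rfl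
    have hclap := hasCompactSupport_lap h2 hc
    obtain ⟨C, hC⟩ := ih (h.add (contDiff_const.mul hlap))
      (hc.add (hclap.mul_left (f := fun _ => (-1 : ℝ))))
    have hmul : ∀ ξ η, fourierLaplace (fun x => ψ x + -1 * lap ψ x) ξ η =
        (1 - freqSq ξ η) * fourierLaplace ψ ξ η := fun ξ η => by
      rw [fourierLaplace_add (χ := fun x => -1 * lap ψ x) h.continuous hc
        (continuous_const.mul hlap.continuous) hclap.mul_left, fourierLaplace_const_mul,
        fourierLaplace_lap h2 hc]
      push_cast
      ring
    refine ⟨2 * C, fun ξ η hη => ?_⟩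
    calc (1 + ‖ξ‖ ^ 2) ^ (N + 1) * ‖fourierLaplace ψ ξ η‖
        = (1 + ‖ξ‖ ^ 2) ^ N * ((1 + ‖ξ‖ ^ 2) * ‖fourierLaplace ψ ξ η‖) := by ring
      _ ≤ (1 + ‖ξ‖ ^ 2) ^ N * (2 * ‖1 - freqSq ξ η‖ * ‖fourierLaplace ψ ξ η‖) := by
        gcongr
        exact one_add_norm_sq_le ξ hη
      _ = 2 * ((1 + ‖ξ‖ ^ 2) ^ N * ‖fourierLaplace (fun x => ψ x + -1 * lap ψ x) ξ η‖) := by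
        rw [hmul, norm_mul]
        ring
      _ ≤ 2 * C := by gcongr; exact hC ξ η hη

/-- An amplitude which converges to `c` at the origin and decays rapidly in the real frequency,
uniformly for small imaginary frequencies. -/
structure RegularAmplitude (A : 𝔼 → 𝔼 → ℂ) (c : ℂ) : Prop where
  tendsto : Tendsto (fun p : 𝔼 × 𝔼 => A p.1 p.2) (𝓝 0) (𝓝 c)
  decay : ∀ N : ℕ, ∃ C, ∀ ξ η, ‖η‖ ≤ 1 / 4 → (1 + ‖ξ‖ ^ 2) ^ N * ‖A ξ η‖ ≤ C

theorem tendsto_freq (i : Fin n) :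
    Tendsto (fun p : 𝔼 × 𝔼 => freq p.1 p.2 i) (𝓝 0) (𝓝 0) := by
  refine squeeze_zero_norm (fun p => norm_freq_le p.1 p.2 i) ?_
  have hcont : Continuous fun p : 𝔼 × 𝔼 => ‖p.2‖ + ‖p.1‖ := by fun_prop
  simpa using hcont.tendsto 0

theorem regularAmplitude_fourierLaplace {ψ : 𝔼 → ℝ} (h : ContDiff ℝ (⊤ : ℕ∞) ψ)
    (hc : HasCompactSupport ψ) :
    RegularAmplitude (fourierLaplace ψ) ((∫ x, ψ x : ℝ) : ℂ) where
  tendsto := by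
    convert (continuous_fourierLaplace h.continuous hc).tendsto 0 using 2
    simp [fourierLaplace, planeWave, integral_complex_ofReal]
  decay N := fourierLaplace_decay N h hc

namespace RegularAmplitude

variable {A B : EuclideanSpace ℝ (Fin n) → EuclideanSpace ℝ (Fin n) → ℂ} {c d : ℂ}

theorem add (hA : RegularAmplitude A c) (hB : RegularAmplitude B d) :
    RegularAmplitude (fun ξ η => A ξ η + B ξ η) (c + d) := by
  refine ⟨hA.tendsto.add hB.tendsto, fun N => ?_⟩
  obtain ⟨C, hC⟩ := hA.decay N
  obtain ⟨D, hD⟩ := hB.decay N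
  refine ⟨C + D, fun ξ η h => ?_⟩
  calc (1 + ‖ξ‖ ^ 2) ^ N * ‖A ξ η + B ξ η‖ ≤ (1 + ‖ξ‖ ^ 2) ^ N * (‖A ξ η‖ + ‖B ξ η‖) := by
        gcongr; exact norm_add_le _ _
    _ ≤ C + D := by linarith [hC ξ η h, hD ξ η h]

theorem const_mul (hA : RegularAmplitude A c) (a : ℂ) :
    RegularAmplitude (fun ξ η => a * A ξ η) (a * c) := by
  refine ⟨hA.tendsto.const_mul a, fun N => ?_⟩
  obtain ⟨C, hC⟩ := hA.decay N
  refine ⟨‖a‖ * C, fun ξ η h => ?_⟩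
  rw [norm_mul, mul_left_comm]
  exact mul_le_mul_of_nonneg_left (hC ξ η h) (norm_nonneg a)

theorem zero : RegularAmplitude (fun _ _ : 𝔼 => 0) 0 :=
  ⟨tendsto_const_nhds, fun _ => ⟨0, fun _ _ _ => by simp⟩⟩

theorem sum {ι : Type*} (s : Finset ι) {A : ι → 𝔼 → 𝔼 → ℂ} {c : ι → ℂ}
    (hA : ∀ i, RegularAmplitude (A i) (c i)) :
    RegularAmplitude (fun ξ η => ∑ i ∈ s, A i ξ η) (∑ i ∈ s, c i) := by
  classical
  induction s using Finset.induction_on with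
  | empty => simpa using zero
  | insert i s hi ih => simpa [Finset.sum_insert hi] using (hA i).add ih

theorem freq_mul (hA : RegularAmplitude A c) (i : Fin n) :
    RegularAmplitude (fun ξ η => freq ξ η i * A ξ η) 0 := by
  refine ⟨by simpa using (tendsto_freq i).mul hA.tendsto, fun N => ?_⟩
  obtain ⟨C, hC⟩ := hA.decay (N + 1)
  refine ⟨C, fun ξ η h => le_trans ?_ (hC ξ η h)⟩
  have hfreq : ‖freq ξ η i‖ ≤ 1 + ‖ξ‖ ^ 2 := by
    nlinarith [norm_freq_le ξ η i, sq_nonneg (‖ξ‖ - 1 / 2)]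
  rw [norm_mul, ← mul_assoc, pow_succ _ N]
  gcongr

theorem freqSq_mul (hA : RegularAmplitude A c) :
    RegularAmplitude (fun ξ η => freqSq ξ η * A ξ η) 0 := by
  simpa [freqSq, Finset.sum_mul, pow_two, mul_assoc] using
    sum Finset.univ fun i => (hA.freq_mul i).freq_mul i

end RegularAmplitude

/-- The rate `√(1/4 + ‖η‖²)` of exponential growth of the propagators at the frequency `ξ = 0`. -/
def rate (η : 𝔼) : ℝ := √(1 / 4 + ‖η‖ ^ 2)

theorem rate_sq (η : 𝔼) : rate η ^ 2 = 1 / 4 + ‖η‖ ^ 2 := sq_sqrt (by positivity)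

theorem half_le_rate (η : 𝔼) : 1 / 2 ≤ rate η := le_sqrt_of_sq_le (by nlinarith [sq_nonneg ‖η‖])

theorem rate_pos (η : 𝔼) : 0 < rate η := one_half_pos.trans_le (half_le_rate η)

theorem rate_le_one {η : 𝔼} (h : ‖η‖ ≤ 1 / 4) : rate η ≤ 1 :=
  sqrt_le_one.2 (by nlinarith [norm_nonneg η])

theorem continuous_rate : Continuous (rate : 𝔼 → ℝ) := by
  unfold rate
  fun_prop

theorem symb_re_sq_sub (ξ η : 𝔼) :
    (symb ξ η).re ^ 2 - (symb ξ η).im ^ 2 = rate η ^ 2 - ‖ξ‖ ^ 2 := by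
  have h := congrArg Complex.re (symb_sq ξ η)
  rw [Complex.add_re, freqSq_re, pow_two, Complex.mul_re] at h
  norm_num at h
  linarith [rate_sq η]

theorem symb_re_mul_im (ξ η : 𝔼) : (symb ξ η).re * (symb ξ η).im = -inner ℝ ξ η := by
  have h := congrArg Complex.im (symb_sq ξ η)
  rw [Complex.add_im, freqSq_im, pow_two, Complex.mul_im] at h
  norm_num at h
  linarith

/-- A lower bound for the loss `rate η ^ 2 - (re (symb ξ η)) ^ 2` in the exponential rate at the
real frequency `ξ`, uniform in the imaginary frequencies `‖η‖ ≤ 1 / 4`. -/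
def gain (ξ : 𝔼) : ℝ := min (‖ξ‖ ^ 2 / 4) (1 / 8)

theorem gain_nonneg (ξ : 𝔼) : 0 ≤ gain ξ := le_min (by positivity) (by norm_num)

theorem symb_re_sq_le (ξ : 𝔼) {η : 𝔼} (h : ‖η‖ ≤ 1 / 4) :
    (symb ξ η).re ^ 2 ≤ rate η ^ 2 - gain ξ := by
  have hsub := symb_re_sq_sub ξ η
  have hmul : (symb ξ η).re ^ 2 * (symb ξ η).im ^ 2 ≤ ‖ξ‖ ^ 2 * ‖η‖ ^ 2 := by
    rw [← mul_pow, symb_re_mul_im, neg_sq, ← mul_pow, ← sq_abs]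
    exact pow_le_pow_left₀ (abs_nonneg _) (abs_real_inner_le_norm ξ η) 2
  have hrate := rate_sq η
  have hgain : gain ξ ≤ ‖ξ‖ ^ 2 / 4 := min_le_left _ _
  have hgain' : gain ξ ≤ 1 / 8 := min_le_right _ _
  have hη : ‖η‖ ^ 2 ≤ 1 / 16 := by nlinarith [norm_nonneg η]
  by_contra! hlt
  have hre : 1 / 8 + ‖η‖ ^ 2 < (symb ξ η).re ^ 2 := by linarith
  have him : 3 / 4 * ‖ξ‖ ^ 2 < (symb ξ η).im ^ 2 := by linarith
  have hprod := mul_lt_mul'' hre him (by positivity) (by positivity)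
  nlinarith [sq_nonneg ‖ξ‖, sq_nonneg ‖η‖]

theorem abs_symb_re_le (ξ : 𝔼) {η : 𝔼} (h : ‖η‖ ≤ 1 / 4) :
    |(symb ξ η).re| ≤ rate η - gain ξ / 2 := by
  have hgain : gain ξ ≤ 1 / 8 := min_le_right _ _
  refine abs_le_of_sq_le_sq ((symb_re_sq_le ξ h).trans ?_) (by linarith [half_le_rate η])
  nlinarith [rate_le_one h, half_le_rate η, gain_nonneg ξ]

theorem norm_exp_mul_le (s : ℂ) {t : ℝ} (ht : 0 ≤ t) :
    ‖Complex.exp (t * s)‖ ≤ exp (t * |s.re|) := by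
  rw [Complex.norm_exp, Complex.re_ofReal_mul]
  gcongr
  exact le_abs_self _

theorem norm_exp_neg_mul_le (s : ℂ) {t : ℝ} (ht : 0 ≤ t) :
    ‖Complex.exp (-(t * s))‖ ≤ exp (t * |s.re|) := by
  simpa using norm_exp_mul_le (-s) ht

theorem norm_propC_le (s : ℂ) {t : ℝ} (ht : 0 ≤ t) : ‖propC s t‖ ≤ exp (t * |s.re|) := by
  rw [propC, Complex.cosh, norm_div, Complex.norm_ofNat]
  linarith [norm_add_le (Complex.exp (t * s)) (Complex.exp (-(t * s))), norm_exp_mul_le s ht,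
    norm_exp_neg_mul_le s ht]

theorem norm_propS_le (s : ℂ) {t : ℝ} (ht : 0 ≤ t) : ‖propS s t‖ ≤ t * exp (t * |s.re|) := by
  have h := norm_image_sub_le_of_norm_deriv_le_segment' (f := propS s) (f' := propC s) (a := 0)
    (b := t) (C := exp (t * |s.re|)) (fun r _ => (hasDerivAt_propS s r).hasDerivWithinAt)
    (fun r hr => (norm_propC_le s hr.1).trans (by gcongr; exact hr.2.le)) t ⟨ht, le_rfl⟩
  rw [show propS s 0 = 0 by simp [propS]] at h
  simpa [mul_comm] using h

theorem norm_propS_le_div {s : ℂ} (hs : s ≠ 0) {t : ℝ} (ht : 0 ≤ t) :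
    ‖propS s t‖ ≤ exp (t * |s.re|) / ‖s‖ := by
  rw [propS, if_neg hs, norm_div]
  gcongr
  rw [Complex.sinh, norm_div, Complex.norm_ofNat]
  linarith [norm_sub_le (Complex.exp (t * s)) (Complex.exp (-(t * s))), norm_exp_mul_le s ht,
    norm_exp_neg_mul_le s ht]

theorem norm_propC_symb_le (ξ : 𝔼) {η : 𝔼} (h : ‖η‖ ≤ 1 / 4) {t : ℝ} (ht : 0 ≤ t) :
    ‖propC (symb ξ η) t‖ ≤ exp (t * (rate η - gain ξ / 2)) :=
  (norm_propC_le _ ht).trans (by gcongr; exact abs_symb_re_le ξ h)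

theorem norm_propS_symb_le (ξ : 𝔼) {η : 𝔼} (h : ‖η‖ ≤ 1 / 4) {t : ℝ} (ht : 0 ≤ t) :
    ‖propS (symb ξ η) t‖ ≤ 8 * exp (t * (rate η - gain ξ / 2)) := by
  rcases le_or_gt (1 / 4) ‖symb ξ η‖ with hs | hs
  · have hs0 : symb ξ η ≠ 0 := norm_pos_iff.1 (by linarith)
    calc ‖propS (symb ξ η) t‖ ≤ exp (t * |(symb ξ η).re|) / ‖symb ξ η‖ := norm_propS_le_div hs0 ht
      _ ≤ exp (t * (rate η - gain ξ / 2)) / (1 / 4) := by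
        gcongr
        exact abs_symb_re_le ξ h
      _ ≤ 8 * exp (t * (rate η - gain ξ / 2)) := by
        linarith [exp_pos (t * (rate η - gain ξ / 2))]
  · have hre : |(symb ξ η).re| ≤ 1 / 4 := (Complex.abs_re_le_norm _).trans hs.le
    have hgain : gain ξ ≤ 1 / 8 := min_le_right _ _
    calc ‖propS (symb ξ η) t‖ ≤ t * exp (t * |(symb ξ η).re|) := norm_propS_le _ ht
      _ ≤ 8 * exp (t / 8) * exp (t * (1 / 4)) := by
        gcongr
        linarith [add_one_le_exp (t / 8)]
      _ = 8 * exp (t * (3 / 8)) := by rw [mul_assoc, ← exp_add]; ring_nf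
      _ ≤ 8 * exp (t * (rate η - gain ξ / 2)) := by
        gcongr
        linarith [half_le_rate η]

/-! ### Steepest descent -/

theorem one_add_pow_mul_exp_le (N : ℕ) {y : ℝ} (hy : 0 ≤ y) :
    (1 + y) ^ N * exp (-(y / 16)) ≤ (16 * N) ^ N := by
  rcases N.eq_zero_or_pos with rfl | hN
  · simp only [pow_zero, one_mul, exp_le_one_iff]
    linarith
  have hN' : (1 : ℝ) ≤ N := by exact_mod_cast hN
  have hbase : 1 + y ≤ 16 * N * exp (y / (16 * N)) :=
    calc 1 + y ≤ 16 * N * (y / (16 * N) + 1) := by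
          rw [mul_add, mul_div_cancel₀ _ (by positivity)]
          linarith
      _ ≤ _ := by gcongr; exact add_one_le_exp _
  calc (1 + y) ^ N * exp (-(y / 16))
      ≤ (16 * N * exp (y / (16 * N))) ^ N * exp (-(y / 16)) := by gcongr
    _ = (16 * N) ^ N := by
        rw [mul_pow, ← exp_nat_mul, mul_assoc, ← exp_add,
          show N * (y / (16 * N)) + -(y / 16) = 0 by field_simp; ring, exp_zero, mul_one]

theorem norm_inv_sqrt_smul_sq (θ : 𝔼) {t : ℝ} (ht : 0 ≤ t) :
    ‖(√t)⁻¹ • θ‖ ^ 2 = ‖θ‖ ^ 2 / t := by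
  rw [norm_smul, mul_pow, norm_inv, norm_of_nonneg (sqrt_nonneg t), inv_pow, sq_sqrt ht,
    inv_mul_eq_div]

theorem one_add_pow_mul_exp_gain_le (N : ℕ) (θ : 𝔼) {t : ℝ} (ht : 1 ≤ t) :
    (1 + ‖θ‖ ^ 2) ^ N * exp (-(t * gain ((√t)⁻¹ • θ) / 2)) ≤
      (16 * N) ^ N * (1 + ‖(√t)⁻¹ • θ‖ ^ 2) ^ N := by
  have ht0 : 0 < t := by linarith
  rw [gain, norm_inv_sqrt_smul_sq θ ht0.le]
  have hΘ : 0 ≤ ‖θ‖ ^ 2 := by positivity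
  generalize ‖θ‖ ^ 2 = Θ at *
  rcases min_cases (Θ / t / 4) (1 / 8 : ℝ) with ⟨h, -⟩ | ⟨h, -⟩ <;> rw [h]
  · calc (1 + Θ) ^ N * exp (-(t * (Θ / t / 4) / 2))
        ≤ (1 + Θ) ^ N * exp (-(Θ / 16)) := by
          refine mul_le_mul_of_nonneg_left (exp_le_exp.2 ?_) (by positivity)
          rw [show t * (Θ / t / 4) / 2 = Θ / 8 by field_simp; ring]
          linarith
      _ ≤ (16 * N) ^ N * 1 := by rw [mul_one]; exact one_add_pow_mul_exp_le N hΘ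
      _ ≤ (16 * N) ^ N * (1 + Θ / t) ^ N := by
          gcongr
          exact one_le_pow₀ (by linarith [div_nonneg hΘ ht0.le])
  · have hsplit : 1 + Θ ≤ (1 + t) * (1 + Θ / t) := by
      rw [show (1 + t) * (1 + Θ / t) = 1 + Θ + t + Θ / t by field_simp; ring]
      linarith [div_nonneg hΘ ht0.le]
    calc (1 + Θ) ^ N * exp (-(t * (1 / 8) / 2))
        ≤ ((1 + t) * (1 + Θ / t)) ^ N * exp (-(t / 16)) := by
          refine mul_le_mul (pow_le_pow_left₀ (by positivity) hsplit N) (exp_le_exp.2 ?_)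
            (by positivity) (by positivity)
          linarith
      _ = (1 + t) ^ N * exp (-(t / 16)) * (1 + Θ / t) ^ N := by rw [mul_pow]; ring
      _ ≤ (16 * N) ^ N * (1 + Θ / t) ^ N := by
          gcongr
          exact one_add_pow_mul_exp_le N ht0.le

theorem symb_sq_eq (ξ η : 𝔼) : symb ξ η ^ 2 =
    (rate η : ℂ) ^ 2 - (‖ξ‖ : ℂ) ^ 2 - 2 * Complex.I * (inner ℝ ξ η : ℝ) := by
  rw [symb_sq, ← Complex.ofReal_pow, rate_sq, ← Complex.ofReal_pow]
  apply Complex.ext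
  · simp only [one_div, Complex.add_re, Complex.inv_re, Complex.re_ofNat, Complex.normSq_ofNat,
      div_self_mul_self', freqSq_re, Complex.sub_re, Complex.ofReal_re, Complex.mul_re,
      Complex.I_re, mul_zero, Complex.im_ofNat, Complex.I_im, mul_one, sub_self, zero_mul,
      Complex.mul_im, add_zero, Complex.ofReal_im, sub_zero]
    ring
  · simp [freqSq_im, -Complex.ofReal_pow, -Complex.ofReal_add]

theorem symb_zero : symb (0 : 𝔼) 0 = 1 / 2 := by
  have harg : (1 / 2 : ℂ).arg = 0 := by
    rw [show (1 / 2 : ℂ) = ((1 / 2 : ℝ) : ℂ) by norm_num,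
      Complex.arg_ofReal_of_nonneg (by norm_num)]
  rw [symb, show (1 / 4 + freqSq (0 : 𝔼) 0 : ℂ) = (1 / 2) ^ 2 by simp [freqSq, freq]; norm_num,
    ← Complex.cpow_nat_mul']
  · norm_num
  all_goals rw [harg]; simp [pi_pos, pi_pos.le]

theorem tendsto_symb : Tendsto (fun p : 𝔼 × 𝔼 => symb p.1 p.2) (𝓝 0) (𝓝 (1 / 2)) := by
  have hfreqSq : Tendsto (fun p : 𝔼 × 𝔼 => 1 / 4 + freqSq p.1 p.2) (𝓝 0)
      (𝓝 (1 / 4 + freqSq (0 : 𝔼) 0)) := by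
    refine ((?_ : Continuous fun p : 𝔼 × 𝔼 => 1 / 4 + freqSq p.1 p.2)).tendsto 0
    unfold freqSq freq
    fun_prop
  rw [← symb_zero (n := n)]
  refine (continuousAt_cpow_const (Or.inl ?_)).tendsto.comp hfreqSq
  simp [freqSq, freq]

theorem tendsto_rate : Tendsto (fun η : 𝔼 => (rate η : ℂ)) (𝓝 0) (𝓝 (1 / 2)) := by
  have hzero : rate (0 : 𝔼) = 1 / 2 := by
    rw [rate, show 1 / 4 + ‖(0 : 𝔼)‖ ^ 2 = (1 / 2) ^ 2 by norm_num, sqrt_sq (by norm_num)]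
  simpa [hzero, Function.comp_def] using
    (Complex.continuous_ofReal.comp continuous_rate).tendsto (0 : 𝔼)

theorem tendsto_rescaled_frequency (θ : 𝔼) :
    Tendsto (fun q : ℝ × 𝔼 => ((√q.1)⁻¹ • θ, q.2)) (atTop ×ˢ 𝓝 0) (𝓝 0) := by
  have hfst : Tendsto (fun q : ℝ × 𝔼 => (√q.1)⁻¹) (atTop ×ˢ 𝓝 0) (𝓝 0) :=
    tendsto_inv_atTop_zero.comp (tendsto_sqrt_atTop.comp tendsto_fst)
  simpa [← Prod.mk_zero_zero] using (hfst.smul_const θ).prodMk_nhds tendsto_snd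

theorem tendsto_symb_rescaled (θ : 𝔼) :
    Tendsto (fun q : ℝ × 𝔼 => symb ((√q.1)⁻¹ • θ) q.2) (atTop ×ˢ 𝓝 0) (𝓝 (1 / 2)) := by
  simpa only [Function.comp_def] using tendsto_symb.comp (tendsto_rescaled_frequency θ)

/-- The exponent of the growing part of the rescaled inversion integrand. -/
def descentPhase (q : ℝ × 𝔼) (θ : 𝔼) : ℂ :=
  (√q.1 * inner ℝ θ q.2 / rate q.2 : ℝ) * Complex.I - (q.1 * rate q.2 : ℝ) +
    q.1 * symb ((√q.1)⁻¹ • θ) q.2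

/-- The singular terms of order `√t` cancel: this is what makes `(t / rate η) • η` the point at
which `η` is the saddle. -/
theorem phase_identity {s s₀ r w Q : ℂ} (hr : r ≠ 0) (hs₀ : s₀ ≠ 0) (hs : s + s₀ ≠ 0)
    (h : s ^ 2 = s₀ ^ 2 - Q / r ^ 2 - 2 * Complex.I * (w / r)) :
    r * w / s₀ * Complex.I - r ^ 2 * s₀ + r ^ 2 * s =
      -Q / (s + s₀) + Complex.I * w * (-Q / r - 2 * Complex.I * w) / (s₀ * (s + s₀) ^ 2) := by
  have hQ : Q = (s₀ ^ 2 - s ^ 2 - 2 * Complex.I * (w / r)) * r ^ 2 := by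
    rw [h]
    field_simp
    ring
  rw [hQ]
  field_simp
  ring

theorem descentPhase_eq {q : ℝ × 𝔼} (hq : 0 < q.1) (θ : 𝔼)
    (hs : symb ((√q.1)⁻¹ • θ) q.2 + rate q.2 ≠ 0) :
    descentPhase q θ = -(‖θ‖ ^ 2 : ℂ) / (symb ((√q.1)⁻¹ • θ) q.2 + rate q.2) +
      Complex.I * (inner ℝ θ q.2 : ℝ) * (-(‖θ‖ ^ 2 : ℂ) / (√q.1 : ℝ) -
        2 * Complex.I * (inner ℝ θ q.2 : ℝ)) /
          (rate q.2 * (symb ((√q.1)⁻¹ • θ) q.2 + rate q.2) ^ 2) := by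
  have hsqrt : ((√q.1 : ℝ) : ℂ) ^ 2 = q.1 := by rw [← Complex.ofReal_pow, sq_sqrt hq.le]
  have hr : ((√q.1 : ℝ) : ℂ) ≠ 0 := Complex.ofReal_ne_zero.2 (sqrt_pos.2 hq).ne'
  rw [← phase_identity hr (Complex.ofReal_ne_zero.2 (rate_pos q.2).ne') hs, descentPhase, hsqrt]
  · push_cast
    ring
  · rw [symb_sq_eq, ← Complex.ofReal_pow ‖_‖, norm_inv_sqrt_smul_sq θ hq.le, hsqrt,
      real_inner_smul_left]
    push_cast
    ring

theorem tendsto_descentPhase (θ : 𝔼) :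
    Tendsto (fun q => descentPhase q θ) (atTop ×ˢ 𝓝 0) (𝓝 (-(‖θ‖ ^ 2 : ℂ))) := by
  have hrate := (tendsto_rate (n := n)).comp (tendsto_snd (f := (atTop : Filter ℝ)))
  have hsum := (tendsto_symb_rescaled θ).add hrate
  have hsqrt : Tendsto (fun q : ℝ × 𝔼 => -(‖θ‖ ^ 2 : ℂ) / (√q.1 : ℝ)) (atTop ×ˢ 𝓝 0) (𝓝 0) := by
    have hinv := (Complex.continuous_ofReal.tendsto 0).comp
      (tendsto_inv_atTop_zero.comp (tendsto_sqrt_atTop.comp (tendsto_fst (g := 𝓝 (0 : 𝔼)))))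
    simpa [Function.comp_def, div_eq_mul_inv] using hinv.const_mul (-(‖θ‖ ^ 2 : ℂ))
  have hinner : Tendsto (fun q : ℝ × 𝔼 => ((inner ℝ θ q.2 : ℝ) : ℂ)) (atTop ×ˢ 𝓝 0) (𝓝 0) := by
    have hcont : Continuous fun x : 𝔼 => ((inner ℝ θ x : ℝ) : ℂ) := by fun_prop
    simpa [Function.comp_def] using (hcont.tendsto 0).comp tendsto_snd
  have hlim := ((tendsto_const_nhds (x := -(‖θ‖ ^ 2 : ℂ))).div hsum (by norm_num)).add
    (((hinner.const_mul Complex.I).mul (hsqrt.sub (hinner.const_mul (2 * Complex.I)))).div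
      (hrate.mul (hsum.pow 2)) (by norm_num))
  rw [show -(‖θ‖ ^ 2 : ℂ) / (1 / 2 + 1 / 2) + Complex.I * 0 * (0 - 2 * Complex.I * 0) /
    (1 / 2 * (1 / 2 + 1 / 2) ^ 2) = -(‖θ‖ ^ 2 : ℂ) by norm_num] at hlim
  refine hlim.congr' ?_
  filter_upwards [hsum.eventually_ne (show (1 / 2 + 1 / 2 : ℂ) ≠ 0 by norm_num),
    tendsto_fst.eventually_gt_atTop 0] with q hs hq
  exact (descentPhase_eq hq θ hs).symm

/-- The integrand of the inversion formula at time `t` and point `(t / rate η) • η`, rescaled in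
frequency by `√t` and normalised by the growth rate; here `q = (t, η)`. -/
def inversionKernel (A B : 𝔼 → 𝔼 → ℂ) (q : ℝ × 𝔼) (θ : 𝔼) : ℂ :=
  Complex.exp ((√q.1 * inner ℝ θ q.2 / rate q.2 : ℝ) * Complex.I - (q.1 * rate q.2 : ℝ)) *
    propagate A B q.1 ((√q.1)⁻¹ • θ) q.2

theorem propagate_eq {A B : 𝔼 → 𝔼 → ℂ} {ξ η : 𝔼} (hs : symb ξ η ≠ 0) (t : ℝ) :
    propagate A B t ξ η = Complex.exp (t * symb ξ η) *
      ((1 + Complex.exp (-2 * (t * symb ξ η))) * A ξ η +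
        (1 - Complex.exp (-2 * (t * symb ξ η))) / symb ξ η * B ξ η) / 2 := by
  have hexp : Complex.exp (-(t * symb ξ η)) =
      Complex.exp (t * symb ξ η) * Complex.exp (-2 * (t * symb ξ η)) := by
    rw [← Complex.exp_add]
    ring_nf
  rw [propagate, propC, propS, if_neg hs, Complex.cosh, Complex.sinh, hexp]
  ring

theorem tendsto_exp_neg_symb (θ : 𝔼) :
    Tendsto (fun q : ℝ × 𝔼 => Complex.exp (-2 * (q.1 * symb ((√q.1)⁻¹ • θ) q.2)))
      (atTop ×ˢ 𝓝 0) (𝓝 0) := by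
  have hre : Tendsto (fun q : ℝ × 𝔼 => (symb ((√q.1)⁻¹ • θ) q.2).re) (atTop ×ˢ 𝓝 0)
      (𝓝 (1 / 2)) := by
    simpa [Function.comp_def] using
      (Complex.continuous_re.tendsto _).comp (tendsto_symb_rescaled θ)
  rw [tendsto_zero_iff_norm_tendsto_zero]
  refine (tendsto_exp_neg_atTop_nhds_zero.comp
    ((tendsto_fst.atTop_mul_pos (by norm_num) hre).const_mul_atTop two_pos)).congr fun q => ?_
  simp [Complex.norm_exp]

theorem tendsto_inversionKernel {A B : 𝔼 → 𝔼 → ℂ} {α β : ℂ} (hA : RegularAmplitude A α)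
    (hB : RegularAmplitude B β) (θ : 𝔼) :
    Tendsto (fun q => inversionKernel A B q θ) (atTop ×ˢ 𝓝 0)
      (𝓝 (Complex.exp (-‖θ‖ ^ 2) * (α / 2 + β))) := by
  have hsymb := tendsto_symb_rescaled θ
  have hexp := tendsto_exp_neg_symb θ
  have hlim := ((tendsto_descentPhase θ).cexp.mul (((hexp.const_add 1).mul
    (hA.tendsto.comp (tendsto_rescaled_frequency θ))).add (((hexp.const_sub 1).div hsymb
      (by norm_num)).mul (hB.tendsto.comp (tendsto_rescaled_frequency θ))))).div_const 2
  rw [show Complex.exp (-(‖θ‖ ^ 2 : ℂ)) * ((1 + 0) * α + (1 - 0) / (1 / 2) * β) / 2 =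
    Complex.exp (-‖θ‖ ^ 2) * (α / 2 + β) by ring] at hlim
  refine hlim.congr' ?_
  filter_upwards [hsymb.eventually_ne (show (1 / 2 : ℂ) ≠ 0 by norm_num)] with q hs
  rw [inversionKernel, propagate_eq hs, descentPhase, Complex.exp_add]
  simp only [Function.comp_apply, Pi.div_apply]
  ring

theorem norm_propagate_le {A B : 𝔼 → 𝔼 → ℂ} {α β : ℂ} (hA : RegularAmplitude A α)
    (hB : RegularAmplitude B β) (N : ℕ) : ∃ C, 0 ≤ C ∧ ∀ ξ η : 𝔼, ‖η‖ ≤ 1 / 4 → ∀ t, 0 ≤ t →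
      (1 + ‖ξ‖ ^ 2) ^ N * ‖propagate A B t ξ η‖ ≤ C * exp (t * (rate η - gain ξ / 2)) := by
  obtain ⟨C, hC⟩ := hA.decay N
  obtain ⟨D, hD⟩ := hB.decay N
  have hC0 : 0 ≤ C := le_trans (by positivity) (hC 0 0 (by simp))
  have hD0 : 0 ≤ D := le_trans (by positivity) (hD 0 0 (by simp))
  refine ⟨C + 8 * D, by positivity, fun ξ η hη t ht => ?_⟩
  set M := exp (t * (rate η - gain ξ / 2))
  calc (1 + ‖ξ‖ ^ 2) ^ N * ‖propagate A B t ξ η‖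
      ≤ (1 + ‖ξ‖ ^ 2) ^ N * (M * ‖A ξ η‖ + 8 * M * ‖B ξ η‖) := by
        gcongr
        refine (norm_add_le _ _).trans ?_
        rw [norm_mul, norm_mul]
        gcongr
        · exact norm_propC_symb_le ξ hη ht
        · exact norm_propS_symb_le ξ hη ht
    _ = M * ((1 + ‖ξ‖ ^ 2) ^ N * ‖A ξ η‖) + 8 * M * ((1 + ‖ξ‖ ^ 2) ^ N * ‖B ξ η‖) := by ring
    _ ≤ M * C + 8 * M * D := by
        gcongr
        · exact hC ξ η hη
        · exact hD ξ η hη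
    _ = (C + 8 * D) * M := by ring

theorem integrable_one_add_norm_sq_inv :
    Integrable fun θ : 𝔼 => ((1 + ‖θ‖ ^ 2) ^ (n + 1))⁻¹ := by
  have h := integrable_rpow_neg_one_add_norm_sq (E := 𝔼) (μ := volume) (r := 2 * (n + 1 : ℕ))
    (by rw [finrank_euclideanSpace_fin]; push_cast; linarith [Nat.cast_nonneg (α := ℝ) n])
  refine h.congr (Eventually.of_forall fun θ => ?_)
  have hpos : (0 : ℝ) ≤ 1 + ‖θ‖ ^ 2 := by positivity
  simp only
  rw [neg_div, mul_div_cancel_left₀ _ two_ne_zero, rpow_neg hpos, rpow_natCast]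

theorem norm_inversionKernel (A B : 𝔼 → 𝔼 → ℂ) (q : ℝ × 𝔼) (θ : 𝔼) :
    ‖inversionKernel A B q θ‖ =
      exp (-(q.1 * rate q.2)) * ‖propagate A B q.1 ((√q.1)⁻¹ • θ) q.2‖ := by
  rw [inversionKernel, norm_mul, Complex.norm_exp, Complex.sub_re, Complex.re_ofReal_mul,
    Complex.I_re, mul_zero, zero_sub, Complex.ofReal_re]

theorem norm_inversionKernel_le {A B : 𝔼 → 𝔼 → ℂ} {α β : ℂ} (hA : RegularAmplitude A α)
    (hB : RegularAmplitude B β) (N : ℕ) : ∃ C, ∀ q : ℝ × 𝔼, 1 ≤ q.1 → ‖q.2‖ ≤ 1 / 4 →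
      ∀ θ, ‖inversionKernel A B q θ‖ ≤ C * ((1 + ‖θ‖ ^ 2) ^ N)⁻¹ := by
  obtain ⟨C, hC0, hC⟩ := norm_propagate_le hA hB N
  refine ⟨C * (16 * N) ^ N, fun ⟨t, η⟩ ht hη θ => ?_⟩
  have hprop := hC ((√t)⁻¹ • θ) η hη t (zero_le_one.trans ht)
  have hgain := one_add_pow_mul_exp_gain_le N θ ht
  rw [← div_eq_mul_inv, le_div_iff₀ (by positivity), norm_inversionKernel]
  simp only
  generalize (√t)⁻¹ • θ = ξ at *
  set P := (1 + ‖ξ‖ ^ 2) ^ N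
  have hP : 0 < P := by positivity
  refine le_of_mul_le_mul_left ?_ hP
  calc P * (exp (-(t * rate η)) * ‖propagate A B t ξ η‖ * (1 + ‖θ‖ ^ 2) ^ N)
      = exp (-(t * rate η)) * (P * ‖propagate A B t ξ η‖) * (1 + ‖θ‖ ^ 2) ^ N := by ring
    _ ≤ exp (-(t * rate η)) * (C * exp (t * (rate η - gain ξ / 2))) * (1 + ‖θ‖ ^ 2) ^ N := by
        gcongr
    _ = C * ((1 + ‖θ‖ ^ 2) ^ N *
          (exp (-(t * rate η)) * exp (t * (rate η - gain ξ / 2)))) := by ring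
    _ = C * ((1 + ‖θ‖ ^ 2) ^ N * exp (-(t * gain ξ / 2))) := by rw [← exp_add]; ring_nf
    _ ≤ C * ((16 * N) ^ N * P) := by gcongr
    _ = P * (C * (16 * N) ^ N) := by ring

theorem continuous_fourierLaplace_left {ψ : 𝔼 → ℝ} (h : Continuous ψ) (hc : HasCompactSupport ψ)
    (η : 𝔼) : Continuous fun ξ => fourierLaplace ψ ξ η := by
  simpa only [Function.comp_def, id_eq] using
    (continuous_fourierLaplace h hc).comp (continuous_id.prodMk (continuous_const (y := η)))

open scoped FourierTransform in
theorem fourier_exp_inner_mul (ψ : 𝔼 → ℝ) (η w : 𝔼) :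
    𝓕 (fun x => ((exp (inner ℝ η x) * ψ x : ℝ) : ℂ)) w = fourierLaplace ψ ((2 * π) • w) η := by
  rw [Real.fourier_eq']
  refine integral_congr_ae (Eventually.of_forall fun y => ?_)
  simp only [planeWave, smul_eq_mul, Complex.real_smul, real_inner_smul_left]
  rw [Complex.ofReal_mul (exp _), Complex.ofReal_exp, ← mul_assoc, ← Complex.exp_add, mul_comm,
    real_inner_comm y w]
  congr 2
  push_cast
  ring

theorem fourierLaplace_inversion {ψ : 𝔼 → ℝ} (h : Continuous ψ) (hc : HasCompactSupport ψ)
    {η : 𝔼} (hi : Integrable fun ξ => fourierLaplace ψ ξ η) {r : ℝ} (hr : 0 < r) (x : 𝔼) :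
    ((2 * π / r) ^ n * (exp (inner ℝ η x) * ψ x) : ℝ) =
      ∫ θ : 𝔼, Complex.exp ((r * inner ℝ θ x : ℝ) * Complex.I) * fourierLaplace ψ (r • θ) η := by
  set v : 𝔼 → ℂ := fun x => ((exp (inner ℝ η x) * ψ x : ℝ) : ℂ) with hv
  have hv_cont : Continuous v := by fun_prop
  have hv_compact : HasCompactSupport v :=
    (show HasCompactSupport fun x => exp (inner ℝ η x) * ψ x from hc.mul_left).comp_left
      (g := Complex.ofReal) Complex.ofReal_zero
  have hfourier := funext (fourier_exp_inner_mul ψ η)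
  have hinv := congrFun (hv_cont.fourierInv_fourier_eq
    (hv_cont.integrable_of_hasCompactSupport hv_compact)
    (hfourier ▸ hi.comp_smul (by positivity))) x
  rw [Real.fourierInv_eq', hfourier] at hinv
  have hscale := Measure.integral_comp_smul (volume : Measure 𝔼) (fun w : 𝔼 =>
    Complex.exp ((2 * π * inner ℝ w x : ℝ) * Complex.I) • fourierLaplace ψ ((2 * π) • w) η)
    (r / (2 * π))
  rw [hinv, finrank_euclideanSpace_fin, abs_of_pos (by positivity), ← inv_pow, inv_div] at hscale
  calc (((2 * π / r) ^ n * (exp (inner ℝ η x) * ψ x) : ℝ) : ℂ)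
      = (2 * π / r) ^ n • v x := by
        rw [hv, Complex.real_smul]
        push_cast
        rfl
    _ = _ := by
        rw [← hscale]
        refine integral_congr_ae (Eventually.of_forall fun θ => ?_)
        simp only [smul_eq_mul, smul_smul, real_inner_smul_left]
        rw [show 2 * π * (r / (2 * π)) = r by field_simp,
          show 2 * π * (r / (2 * π) * inner ℝ θ x) = r * inner ℝ θ x by field_simp]

/-- The factor that normalises a solution at time `t` and point `(t / rate η) • η`, in the
coordinates `q = (t, η)`. -/
def normFactor (q : ℝ × 𝔼) : ℝ :=
  (2 * π * √q.1) ^ n * exp (inner ℝ q.2 ((q.1 / rate q.2) • q.2) - q.1 * rate q.2)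

theorem HasAmplitude.integrable_fourierLaplace {a : 𝔼 → ℝ → ℝ} {A B : 𝔼 → 𝔼 → ℂ} {α β : ℂ}
    (h : HasAmplitude a A B) (hA : RegularAmplitude A α) (hB : RegularAmplitude B β) {t : ℝ}
    (ht : 0 < t) (ha : Continuous fun x => a x t) (hc : HasCompactSupport fun x => a x t) {η : 𝔼}
    (hη : ‖η‖ ≤ 1 / 4) : Integrable fun ξ => fourierLaplace (fun x => a x t) ξ η := by
  obtain ⟨C, hC0, hC⟩ := norm_propagate_le hA hB (n + 1)
  refine (integrable_one_add_norm_sq_inv.const_mul (C * exp (t * rate η))).mono'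
    (continuous_fourierLaplace_left ha hc η).aestronglyMeasurable
    (Eventually.of_forall fun ξ => ?_)
  rw [← div_eq_mul_inv, le_div_iff₀ (by positivity), mul_comm, h t ht]
  refine (hC ξ η hη t ht.le).trans ?_
  gcongr
  linarith [gain_nonneg ξ]

theorem HasAmplitude.inversionKernel_eq {a : 𝔼 → ℝ → ℝ} {A B : 𝔼 → 𝔼 → ℂ}
    (h : HasAmplitude a A B) {t : ℝ} (ht : 0 < t) (η θ : 𝔼) :
    inversionKernel A B (t, η) θ = Complex.exp (-(t * rate η) : ℝ) *
      (Complex.exp (((√t)⁻¹ * inner ℝ θ ((t / rate η) • η) : ℝ) * Complex.I) *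
        fourierLaplace (fun x => a x t) ((√t)⁻¹ • θ) η) := by
  have hphase : (√t)⁻¹ * inner ℝ θ ((t / rate η) • η) = √t * inner ℝ θ η / rate η := by
    rw [real_inner_smul_right]
    field_simp [(sqrt_pos.2 ht).ne', (rate_pos η).ne']
    rw [sq_sqrt ht.le]
  rw [inversionKernel, h t ht, ← mul_assoc, ← Complex.exp_add, hphase]
  congr 2
  push_cast
  ring

theorem HasAmplitude.continuous_inversionKernel {a : 𝔼 → ℝ → ℝ} {A B : 𝔼 → 𝔼 → ℂ}
    (h : HasAmplitude a A B) {t : ℝ} (ht : 0 < t) (ha : Continuous fun x => a x t)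
    (hc : HasCompactSupport fun x => a x t) (η : 𝔼) : Continuous (inversionKernel A B (t, η)) := by
  have hF : Continuous fun θ : 𝔼 => fourierLaplace (fun x => a x t) ((√t)⁻¹ • θ) η :=
    (continuous_fourierLaplace_left ha hc η).comp (continuous_const_smul _)
  rw [funext (h.inversionKernel_eq ht η)]
  fun_prop

theorem HasAmplitude.normFactor_mul_eq_integral {a : 𝔼 → ℝ → ℝ} {A B : 𝔼 → 𝔼 → ℂ} {α β : ℂ}
    (h : HasAmplitude a A B) (hA : RegularAmplitude A α) (hB : RegularAmplitude B β) {t : ℝ}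
    (ht : 0 < t) (ha : Continuous fun x => a x t) (hc : HasCompactSupport fun x => a x t) {η : 𝔼}
    (hη : ‖η‖ ≤ 1 / 4) :
    ((normFactor (t, η) * a ((t / rate η) • η) t : ℝ) : ℂ) =
      ∫ θ, inversionKernel A B (t, η) θ := by
  simp_rw [h.inversionKernel_eq ht]
  rw [integral_const_mul, ← fourierLaplace_inversion ha hc
    (h.integrable_fourierLaplace hA hB ht ha hc hη) (inv_pos.2 (sqrt_pos.2 ht)),
    ← Complex.ofReal_exp, ← Complex.ofReal_mul, normFactor, div_inv_eq_mul, sub_eq_add_neg, exp_add]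
  ring_nf

/-- The Gaussian integral `∫ exp (-|θ|²)` over `ℝⁿ`. -/
def gaussConst (n : ℕ) : ℝ := ∫ θ : EuclideanSpace ℝ (Fin n), exp (-‖θ‖ ^ 2)

theorem gaussConst_pos (n : ℕ) : 0 < gaussConst n := by
  have h := GaussianFourier.integral_rexp_neg_mul_sq_norm (V := EuclideanSpace ℝ (Fin n)) one_pos
  simp only [neg_mul, one_mul] at h
  rw [gaussConst, h]
  positivity

theorem HasAmplitude.tendsto_normFactor_mul {a : 𝔼 → ℝ → ℝ} {A B : 𝔼 → 𝔼 → ℂ} {α β : ℝ}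
    (h : HasAmplitude a A B) (hA : RegularAmplitude A α) (hB : RegularAmplitude B β)
    (ha : ∀ t, 0 < t → Continuous fun x => a x t)
    (hc : ∀ t, 0 < t → HasCompactSupport fun x => a x t) :
    Tendsto (fun q : ℝ × 𝔼 => normFactor q * a ((q.1 / rate q.2) • q.2) q.1) (atTop ×ˢ 𝓝 0)
      (𝓝 (gaussConst n * (α / 2 + β))) := by
  have hsmall : ∀ᶠ η : 𝔼 in 𝓝 0, ‖η‖ ≤ 1 / 4 := by
    filter_upwards [closedBall_mem_nhds (0 : 𝔼) (show (0 : ℝ) < 1 / 4 by norm_num)] with η hη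
    simpa using hη
  have hev : ∀ᶠ q : ℝ × 𝔼 in atTop ×ˢ 𝓝 0, 0 < q.1 ∧ 1 ≤ q.1 ∧ ‖q.2‖ ≤ 1 / 4 :=
    ((eventually_gt_atTop 0).and (eventually_ge_atTop 1)).prod_mk hsmall |>.mono
      fun q hq => ⟨hq.1.1, hq.1.2, hq.2⟩
  obtain ⟨C, hC⟩ := norm_inversionKernel_le hA hB (n + 1)
  have hlim : Tendsto (fun q : ℝ × 𝔼 => ∫ θ, inversionKernel A B q θ) (atTop ×ˢ 𝓝 0)
      (𝓝 (∫ θ : 𝔼, Complex.exp (-‖θ‖ ^ 2) * (α / 2 + β))) :=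
    tendsto_integral_filter_of_dominated_convergence
      (fun θ : 𝔼 => C * ((1 + ‖θ‖ ^ 2) ^ (n + 1))⁻¹)
      (hev.mono fun q hq => (h.continuous_inversionKernel hq.1 (ha _ hq.1) (hc _ hq.1)
        q.2).aestronglyMeasurable)
      (hev.mono fun q hq => Eventually.of_forall (hC q hq.2.1 hq.2.2))
      (integrable_one_add_norm_sq_inv.const_mul C)
      (Eventually.of_forall fun θ => tendsto_inversionKernel hA hB θ)
  have hgauss : ∫ θ : 𝔼, Complex.exp (-‖θ‖ ^ 2) * (α / 2 + β) =
      ((gaussConst n * (α / 2 + β) : ℝ) : ℂ) := by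
    rw [integral_mul_const, Complex.ofReal_mul, gaussConst, ← integral_complex_ofReal]
    push_cast
    rfl
  rw [hgauss] at hlim
  have hmul := hlim.congr' (hev.mono fun q hq =>
    (h.normFactor_mul_eq_integral hA hB hq.1 (ha _ hq.1) (hc _ hq.1) hq.2.2).symm)
  simpa [Function.comp_def] using (Complex.continuous_re.tendsto _).comp hmul

/-! ### The limit of vanishing velocity -/

/-- The space-time filter `t → ∞`, `x / t → 0`. -/
def coneFilter (n : ℕ) : Filter (EuclideanSpace ℝ (Fin n) × ℝ) :=
  comap (fun p => (p.2, p.2⁻¹ • p.1)) (atTop ×ˢ 𝓝 0)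

/-- The imaginary frequency at which the inversion integrand at the point `(t • b, t)` has its
saddle: the inverse of `η ↦ (rate η)⁻¹ • η`. -/
def saddle (b : 𝔼) : 𝔼 := (2 * √(1 - ‖b‖ ^ 2))⁻¹ • b

/-- The factor that normalises a solution at the point `p = (x, t)`. -/
def coneFactor (p : 𝔼 × ℝ) : ℝ := normFactor (p.2, saddle (p.2⁻¹ • p.1))

theorem tendsto_time_coneFilter : Tendsto (fun p : 𝔼 × ℝ => p.2) (coneFilter n) atTop :=
  tendsto_fst.comp tendsto_comap

theorem tendsto_velocity_coneFilter :
    Tendsto (fun p : 𝔼 × ℝ => p.2⁻¹ • p.1) (coneFilter n) (𝓝 0) :=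
  tendsto_snd.comp tendsto_comap

theorem exists_closedBall_of_eventually_coneFilter {r : 𝔼 × ℝ → Prop}
    (h : ∀ᶠ p in coneFilter n, r p) :
    ∃ δ > 0, ∀ᶠ t in atTop, ∀ x ∈ closedBall (0 : 𝔼) (δ * t), r (x, t) := by
  obtain ⟨pt, ht, pb, hb, hr⟩ := eventually_prod_iff.1 (eventually_comap.1 h)
  obtain ⟨δ, hδ, hball⟩ := Metric.nhds_basis_closedBall.eventually_iff.1 hb
  refine ⟨δ, hδ, ?_⟩
  filter_upwards [ht, eventually_gt_atTop 0] with t ht htpos x hx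
  refine hr ht (hball ?_) (x, t) rfl
  rw [mem_closedBall_zero_iff, norm_smul, norm_inv, norm_of_nonneg htpos.le, inv_mul_le_iff₀ htpos,
    mul_comm]
  exact mem_closedBall_zero_iff.1 hx

theorem rate_saddle {b : 𝔼} (hb : ‖b‖ < 1) : rate (saddle b) = (2 * √(1 - ‖b‖ ^ 2))⁻¹ := by
  have hpos : 0 < 1 - ‖b‖ ^ 2 := by nlinarith [norm_nonneg b]
  have hinv : 0 ≤ (2 * √(1 - ‖b‖ ^ 2))⁻¹ := by positivity
  rw [rate, saddle, norm_smul, norm_of_nonneg hinv, sqrt_eq_iff_eq_sq (by positivity) hinv,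
    mul_pow, inv_pow, mul_pow, sq_sqrt hpos.le]
  field_simp
  ring

theorem inv_rate_saddle_smul {b : 𝔼} (hb : ‖b‖ < 1) : (rate (saddle b))⁻¹ • saddle b = b := by
  have hpos : 0 < 1 - ‖b‖ ^ 2 := by nlinarith [norm_nonneg b]
  rw [rate_saddle hb, saddle, inv_smul_smul₀ (by positivity)]

theorem tendsto_saddle : Tendsto (saddle : 𝔼 → 𝔼) (𝓝 0) (𝓝 0) := by
  have hcont : ContinuousAt (saddle : 𝔼 → 𝔼) 0 := by
    have h : ContinuousAt (fun b : 𝔼 => 2 * √(1 - ‖b‖ ^ 2)) 0 := by fun_prop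
    exact (h.inv₀ (by simp)).smul continuousAt_id
  simpa [ContinuousAt, saddle] using hcont

theorem HasAmplitude.tendsto_coneFactor_mul {a : 𝔼 → ℝ → ℝ} {A B : 𝔼 → 𝔼 → ℂ} {α β : ℝ}
    (h : HasAmplitude a A B) (hA : RegularAmplitude A α) (hB : RegularAmplitude B β)
    (ha : ∀ t, 0 < t → Continuous fun x => a x t)
    (hc : ∀ t, 0 < t → HasCompactSupport fun x => a x t) :
    Tendsto (fun p => coneFactor p * a p.1 p.2) (coneFilter n)
      (𝓝 (gaussConst n * (α / 2 + β))) := by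
  refine ((h.tendsto_normFactor_mul hA hB ha hc).comp (tendsto_time_coneFilter.prodMk
    (tendsto_saddle.comp tendsto_velocity_coneFilter))).congr' ?_
  filter_upwards [tendsto_time_coneFilter.eventually_gt_atTop 0,
    tendsto_velocity_coneFilter (ball_mem_nhds 0 one_pos)] with p hp hb
  have hpoint : (p.2 / rate (saddle (p.2⁻¹ • p.1))) • saddle (p.2⁻¹ • p.1) = p.1 := by
    rw [div_eq_mul_inv, mul_smul, inv_rate_saddle_smul (by simpa using hb), smul_inv_smul₀ hp.ne']
  simp only [Function.comp_apply, hpoint, coneFactor]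

theorem norm_le_sum_norm_apply_single {F : Type*} [NormedAddCommGroup F] [NormedSpace ℝ F]
    (L : 𝔼 →L[ℝ] F) : ‖L‖ ≤ ∑ k, ‖L (𝐞 k)‖ := by
  refine L.opNorm_le_bound (Finset.sum_nonneg fun k _ => norm_nonneg _) fun v => ?_
  have hv : L v = ∑ k, v k • L (𝐞 k) := by
    conv_lhs => rw [← (EuclideanSpace.basisFun (Fin n) ℝ).sum_repr v]
    simp [map_sum]
  rw [hv, Finset.sum_mul]
  refine norm_sum_le_of_le _ fun k _ => ?_
  rw [norm_smul, mul_comm]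
  gcongr
  exact PiLp.norm_apply_le v k

theorem HasAmplitude.tendsto_coneFactor_smul_fderiv {a : 𝔼 → ℝ → ℝ} {A B : 𝔼 → 𝔼 → ℂ} {α β : ℂ}
    (h : HasAmplitude a A B) (hA : RegularAmplitude A α) (hB : RegularAmplitude B β)
    (ha : ∀ t, 0 < t → ContDiff ℝ 1 fun x => a x t)
    (hc : ∀ t, 0 < t → HasCompactSupport fun x => a x t) :
    Tendsto (fun p : 𝔼 × ℝ => coneFactor p • fderiv ℝ (fun z => a z p.2) p.1)
      (coneFilter n) (𝓝 0) := by
  have hzero : ∀ {C : 𝔼 → 𝔼 → ℂ} {γ : ℂ} (k : Fin n), RegularAmplitude C γ →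
      RegularAmplitude (fun ξ η => -freq ξ η k * C ξ η) ((0 : ℝ) : ℂ) := fun k hC => by
    simpa using (hC.freq_mul k).const_mul (-1)
  have hcoord : ∀ k, Tendsto (fun p : 𝔼 × ℝ =>
      ‖(coneFactor p • fderiv ℝ (fun z => a z p.2) p.1) (𝐞 k)‖) (coneFilter n) (𝓝 0) := fun k => by
    simpa using ((h.fderiv_apply ha hc k).tendsto_coneFactor_mul (hzero k hA) (hzero k hB)
      (fun t ht => ((ha t ht).continuous_fderiv one_ne_zero).clm_apply continuous_const)
      (fun t ht => (hc t ht).fderiv_apply (𝕜 := ℝ) _)).norm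
  refine squeeze_zero_norm (fun p => norm_le_sum_norm_apply_single _) ?_
  simpa using tendsto_finsetSum Finset.univ fun k _ => hcoord k

section Quotient

variable {ι E F : Type*} [NormedAddCommGroup E] [NormedSpace ℝ E] [NormedAddCommGroup F]
  [NormedSpace ℝ F]

theorem hasFDerivAt_inv_smul {P : E → ℝ} {Q : E → F} {x : E} (hP : DifferentiableAt ℝ P x)
    (hQ : DifferentiableAt ℝ Q x) (h : P x ≠ 0) :
    HasFDerivAt (fun z => (P z)⁻¹ • Q z)
      ((P x)⁻¹ • (fderiv ℝ Q x - (fderiv ℝ P x).smulRight ((P x)⁻¹ • Q x))) x := by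
  refine (((hasDerivAt_inv h).comp_hasFDerivAt x hP.hasFDerivAt).smul
    hQ.hasFDerivAt).congr_fderiv ?_
  ext v
  simp only [Function.comp_apply, add_apply, smul_apply, sub_apply,
    ContinuousLinearMap.smulRight_apply, smul_sub, smul_smul, smul_eq_mul]
  rw [sub_eq_add_neg, ← neg_smul]
  congr 2
  field_simp

theorem tendsto_inv_smul_of_tendsto_smul {l : Filter ι} {N P : ι → ℝ} {Q : ι → F} {c : ℝ} {m : F}
    (hc : c ≠ 0) (hP : Tendsto (fun i => N i * P i) l (𝓝 c))
    (hQ : Tendsto (fun i => N i • Q i) l (𝓝 (c • m))) :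
    Tendsto (fun i => (P i)⁻¹ • Q i) l (𝓝 m) := by
  have h := (hP.inv₀ hc).smul hQ
  rw [inv_smul_smul₀ hc] at h
  refine h.congr' ?_
  filter_upwards [hP.eventually_ne hc] with i hi
  rw [smul_smul, mul_inv, mul_comm (N i)⁻¹, mul_assoc, inv_mul_cancel₀ (left_ne_zero_of_mul hi),
    mul_one]

theorem tendsto_fderiv_inv_smul {l : Filter ι} {N : ι → ℝ} {P : ι → E → ℝ} {Q : ι → E → F}
    {x : ι → E} {c : ℝ} {m : F} (hc : c ≠ 0)
    (hdP : ∀ᶠ i in l, DifferentiableAt ℝ (P i) (x i))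
    (hdQ : ∀ᶠ i in l, DifferentiableAt ℝ (Q i) (x i))
    (hP : Tendsto (fun i => N i * P i (x i)) l (𝓝 c))
    (hQ : Tendsto (fun i => N i • Q i (x i)) l (𝓝 (c • m)))
    (hP' : Tendsto (fun i => N i • fderiv ℝ (P i) (x i)) l (𝓝 0))
    (hQ' : Tendsto (fun i => N i • fderiv ℝ (Q i) (x i)) l (𝓝 0)) :
    Tendsto (fun i => fderiv ℝ (fun z => (P i z)⁻¹ • Q i z) (x i)) l (𝓝 0) := by
  have hm := tendsto_inv_smul_of_tendsto_smul hc hP hQ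
  have hsmulRight : Tendsto (fun i =>
      (N i • fderiv ℝ (P i) (x i)).smulRight ((P i (x i))⁻¹ • Q i (x i))) l (𝓝 0) := by
    refine squeeze_zero_norm (a := fun i => ‖N i • fderiv ℝ (P i) (x i)‖ *
      ‖(P i (x i))⁻¹ • Q i (x i)‖) (fun i => ?_) (by simpa using hP'.norm.mul hm.norm)
    rw [ContinuousLinearMap.norm_smulRight_apply]
  have hnum : Tendsto (fun i => N i • (fderiv ℝ (Q i) (x i) -
      (fderiv ℝ (P i) (x i)).smulRight ((P i (x i))⁻¹ • Q i (x i)))) l (𝓝 (c • 0)) := by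
    rw [smul_zero, ← sub_zero (0 : E →L[ℝ] F)]
    refine (hQ'.sub hsmulRight).congr fun i => ?_
    rw [smul_sub]
    congr 1
    ext v
    simp [mul_smul]
  have hquot : ∀ᶠ i in l, (P i (x i))⁻¹ • (fderiv ℝ (Q i) (x i) -
      (fderiv ℝ (P i) (x i)).smulRight ((P i (x i))⁻¹ • Q i (x i))) =
      fderiv ℝ (fun z => (P i z)⁻¹ • Q i z) (x i) := by
    filter_upwards [hP.eventually_ne hc, hdP, hdQ] with i hi hPi hQi
    exact (hasFDerivAt_inv_smul hPi hQi (right_ne_zero_of_mul hi)).fderiv.symm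
  refine Tendsto.congr' hquot ?_
  exact tendsto_inv_smul_of_tendsto_smul hc hP hnum

end Quotient

theorem existsUnique_fixedPoint_of_nnnorm_fderiv_le {E : Type*} [NormedAddCommGroup E]
    [NormedSpace ℝ E] {K : Set E} (hK : IsComplete K) (hconv : Convex ℝ K) (hne : K.Nonempty)
    {F : E → E} {c : NNReal} (hc : c < 1) (hd : ∀ x ∈ K, DifferentiableAt ℝ F x)
    (hF : ∀ x ∈ K, ‖fderiv ℝ F x‖₊ ≤ c) (hmaps : MapsTo F K K) : ∃! x, x ∈ K ∧ F x = x := by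
  have : CompleteSpace K := hK.completeSpace_coe
  have : Nonempty K := hne.to_subtype
  have hcontr : ContractingWith c (hmaps.restrict F K K) :=
    ⟨hc, (hconv.lipschitzOnWith_of_nnnorm_fderiv_le hd hF).mapsToRestrict hmaps⟩
  refine ⟨hcontr.fixedPoint, ⟨Subtype.coe_prop _,
    congrArg Subtype.val hcontr.fixedPoint_isFixedPt⟩, fun y hy => ?_⟩
  exact congrArg Subtype.val
    (hcontr.fixedPoint_unique (x := ⟨y, hy.1⟩) (Subtype.ext hy.2))

/-! ### Asymptotics of Klein–Gordon solutions -/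

/-- The vector field whose `j`-th coordinate is the derivative of `v` along the Lorentz boost
`t ∂ⱼ + xⱼ ∂ₜ`. Each coordinate solves the Klein–Gordon equation when `v` does. -/
def boost (v : 𝔼 → ℝ → ℝ) (x : 𝔼) (t : ℝ) : 𝔼 :=
  t • gradient (fun z => v z t) x + ∂ₜ v x t • x

theorem boost_apply {v : 𝔼 → ℝ → ℝ} (hv : ContDiffOn ℝ 1 ↿v ℍ) (x : 𝔼) {t : ℝ} (ht : 0 ≤ t)
    (j : Fin n) : boost v x t j = t * ∂ₓ j v x t + x j * ∂ₜ v x t := by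
  have hgrad : gradient (fun z => v z t) x j = ∂ₓ j v x t := by
    rw [spaceDeriv, ← fderiv_slice_apply hv x ht, gradient,
      ← InnerProductSpace.toDual_symm_apply, EuclideanSpace.inner_single_right]
    simp
  simp [boost, hgrad, mul_comm]

theorem inv_smul_boost_eq_iff {v : 𝔼 → ℝ → ℝ} {x : 𝔼} {t : ℝ} (ht : t ≠ 0) (h : ∂ₜ v x t ≠ 0) :
    (∂ₜ v x t)⁻¹ • boost v x t = x ↔ gradient (fun z => v z t) x = 0 := by
  rw [inv_smul_eq_iff₀ h, boost, add_eq_right, smul_eq_zero_iff_right ht]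

theorem integral_smul_self_apply {h : 𝔼 → ℝ} (hcont : Continuous h) (hc : HasCompactSupport h)
    (j : Fin n) : (∫ x, h x • x) j = ∫ x, x j * h x := by
  have hint : Integrable fun x => h x • x :=
    (hcont.smul continuous_id).integrable_of_hasCompactSupport hc.smul_right
  simpa [mul_comm] using ((EuclideanSpace.proj j : 𝔼 →L[ℝ] ℝ).integral_comp_comm hint).symm

theorem integral_add_half_mul {f k : 𝔼 → ℝ} (hf : Continuous f) (hk : Continuous k)
    (hfc : HasCompactSupport f) (hkc : HasCompactSupport k) :
    ∫ x, (k x + 1 / 2 * f x) = (∫ x, k x) + (∫ x, f x) / 2 := by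
  rw [integral_add (hk.integrable_of_hasCompactSupport hkc)
    ((hf.integrable_of_hasCompactSupport hfc).const_mul _), integral_const_mul]
  ring

theorem tendsto_euclideanSpace {ι : Type*} {l : Filter ι} {F : ι → 𝔼} {m : 𝔼}
    (h : ∀ j, Tendsto (fun i => F i j) l (𝓝 (m j))) : Tendsto F l (𝓝 m) :=
  ((PiLp.continuous_toLp 2 _).tendsto _).comp (tendsto_pi_nhds.2 h)

theorem norm_le_sum_abs (y : 𝔼) : ‖y‖ ≤ ∑ j, |y j| := by
  conv_lhs => rw [← (EuclideanSpace.basisFun (Fin n) ℝ).sum_repr y]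
  refine norm_sum_le_of_le _ fun j _ => ?_
  simp [norm_smul]

theorem norm_fderiv_le_sum_norm_fderiv_apply {G : Type*} [NormedAddCommGroup G] [NormedSpace ℝ G]
    {F : G → 𝔼} {x : G} (hF : DifferentiableAt ℝ F x) :
    ‖fderiv ℝ F x‖ ≤ ∑ j, ‖fderiv ℝ (fun z => F z j) x‖ := by
  refine ContinuousLinearMap.opNorm_le_bound _ (by positivity) fun w => ?_
  refine (norm_le_sum_abs _).trans ((Finset.sum_le_sum fun j _ => ?_).trans
    (Finset.sum_mul _ _ _).ge)
  have hj := (EuclideanSpace.proj j : 𝔼 →L[ℝ] ℝ).hasFDerivAt.comp x hF.hasFDerivAt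
  have hjw : fderiv ℝ F x w j = fderiv ℝ (fun z => F z j) x w :=
    (DFunLike.congr_fun hj.fderiv w).symm
  rw [hjw]
  exact (fderiv ℝ (fun z => F z j) x).le_opNorm w

theorem RegularAmplitude.quarter_add_freqSq_mul {A : 𝔼 → 𝔼 → ℂ} {c : ℝ}
    (hA : RegularAmplitude A c) :
    RegularAmplitude (fun ξ η => (1 / 4 + freqSq ξ η) * A ξ η) ((c / 4 : ℝ) : ℂ) := by
  simpa [add_mul, div_eq_inv_mul] using (hA.const_mul (1 / 4)).add hA.freqSq_mul

theorem contDiff_coord_mul {ψ : 𝔼 → ℝ} {m : WithTop ℕ∞} (hψ : ContDiff ℝ m ψ) (j : Fin n) :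
    ContDiff ℝ m fun x => x j * ψ x :=
  (EuclideanSpace.proj j : 𝔼 →L[ℝ] ℝ).contDiff.mul hψ

theorem regularAmplitude_fourierLaplace_coord_mul {ψ : 𝔼 → ℝ} (hψ : ContDiff ℝ (⊤ : ℕ∞) ψ)
    (hc : HasCompactSupport ψ) (j : Fin n) :
    RegularAmplitude (fourierLaplace fun x => x j * ψ x) ((∫ x, x j * ψ x : ℝ) : ℂ) :=
  regularAmplitude_fourierLaplace (contDiff_coord_mul hψ j) hc.mul_left

theorem regularAmplitude_boost {f : 𝔼 → ℝ} (hf : ContDiff ℝ (⊤ : ℕ∞) f)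
    (hfc : HasCompactSupport f) (j : Fin n) :
    RegularAmplitude (fun ξ η => freq ξ η j * fourierLaplace f ξ η +
      (1 / 4 + freqSq ξ η) * fourierLaplace (fun x => x j * f x) ξ η)
      (((∫ x, x j * f x) / 4 : ℝ) : ℂ) := by
  simpa using ((regularAmplitude_fourierLaplace hf hfc).freq_mul j).add
    (regularAmplitude_fourierLaplace_coord_mul hf hfc j).quarter_add_freqSq_mul

namespace KleinGordon

section Asymptotics

variable {f k : EuclideanSpace ℝ (Fin n) → ℝ} {v : EuclideanSpace ℝ (Fin n) → ℝ → ℝ} {t : ℝ}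

theorem contDiff_partialDeriv_slice {c : ℝ} (W : KleinGordon c f k v) (ht : 0 ≤ t) (V : 𝔼 × ℝ) :
    ContDiff ℝ 1 fun x => partialDeriv V v x t :=
  contDiff_slice (contDiffOn_partialDeriv W.contDiffOn (by norm_num) V) ht

theorem contDiff_boost {c : ℝ} (W : KleinGordon c f k v) (ht : 0 ≤ t) :
    ContDiff ℝ 1 fun x => boost v x t := by
  rw [contDiff_euclidean]
  intro j
  simp only [boost_apply (W.contDiffOn.of_le one_le_two) _ ht]
  have hx := W.contDiff_partialDeriv_slice ht (𝐞 j, 0)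
  have ht := W.contDiff_partialDeriv_slice ht (0, 1)
  unfold spaceDeriv timeDeriv
  fun_prop

theorem hasCompactSupport_boost {c : ℝ} (W : KleinGordon c f k v) (hs : SpatiallyCompact v)
    (ht : 0 ≤ t) (j : Fin n) : HasCompactSupport fun x => boost v x t j := by
  simp only [boost_apply (W.contDiffOn.of_le one_le_two) _ ht]
  exact ((hs.partialDeriv _).hasCompactSupport ht).mul_left.add
    ((hs.partialDeriv _).hasCompactSupport ht).mul_left

theorem hasAmplitude_boost_apply (W : KleinGordon (1 / 4) f k v) (hs : SpatiallyCompact v)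
    (j : Fin n) :
    HasAmplitude (fun x t => boost v x t j) (fourierLaplace fun x => x j * k x)
      fun ξ η => freq ξ η j * fourierLaplace f ξ η +
        (1 / 4 + freqSq ξ η) * fourierLaplace (fun x => x j * f x) ξ η := fun t ht => by
  simpa only [boost_apply (W.contDiffOn.of_le one_le_two) _ ht.le]
    using W.hasAmplitude_boost hs j t ht

variable (W : KleinGordon (1 / 4) f k v) (hf : ContDiff ℝ (⊤ : ℕ∞) f) (hk : ContDiff ℝ (⊤ : ℕ∞) k)
  (hfc : HasCompactSupport f) (hkc : HasCompactSupport k)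

include W hf hk hfc hkc

theorem tendsto_coneFactor_mul :
    Tendsto (fun p => coneFactor p * v p.1 p.2) (coneFilter n)
      (𝓝 (gaussConst n * ∫ x, (k x + 1 / 2 * f x))) := by
  have hs := W.spatiallyCompact hfc hkc
  convert (W.hasAmplitude hs).tendsto_coneFactor_mul (regularAmplitude_fourierLaplace hf hfc)
    (regularAmplitude_fourierLaplace hk hkc)
    (fun t ht => (contDiff_slice W.contDiffOn ht.le).continuous)
    (fun t ht => hs.hasCompactSupport ht.le) using 3
  rw [integral_add_half_mul hf.continuous hk.continuous hfc hkc]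
  ring

theorem tendsto_coneFactor_mul_timeDeriv :
    Tendsto (fun p => coneFactor p * ∂ₜ v p.1 p.2) (coneFilter n)
      (𝓝 (gaussConst n / 2 * ∫ x, (k x + 1 / 2 * f x))) := by
  have hs := W.spatiallyCompact hfc hkc
  convert (W.hasAmplitude_timeDeriv hs).tendsto_coneFactor_mul
    (regularAmplitude_fourierLaplace hk hkc)
    (regularAmplitude_fourierLaplace hf hfc).quarter_add_freqSq_mul
    (fun t ht => (W.contDiff_partialDeriv_slice ht.le _).continuous)
    (fun t ht => (hs.partialDeriv _).hasCompactSupport ht.le) using 2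
  rw [integral_add_half_mul hf.continuous hk.continuous hfc hkc]
  ring

theorem tendsto_coneFactor_smul_fderiv_timeDeriv :
    Tendsto (fun p : 𝔼 × ℝ => coneFactor p • fderiv ℝ (fun z => ∂ₜ v z p.2) p.1)
      (coneFilter n) (𝓝 0) := by
  have hs := W.spatiallyCompact hfc hkc
  exact (W.hasAmplitude_timeDeriv hs).tendsto_coneFactor_smul_fderiv
    (regularAmplitude_fourierLaplace hk hkc)
    (regularAmplitude_fourierLaplace hf hfc).quarter_add_freqSq_mul
    (fun t ht => W.contDiff_partialDeriv_slice ht.le _)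
    (fun t ht => (hs.partialDeriv _).hasCompactSupport ht.le)

theorem tendsto_coneFactor_smul_boost :
    Tendsto (fun p => coneFactor p • boost v p.1 p.2) (coneFilter n)
      (𝓝 ((gaussConst n / 2) • ∫ x, (k x + 1 / 2 * f x) • x)) := by
  have hs := W.spatiallyCompact hfc hkc
  refine tendsto_euclideanSpace fun j => ?_
  have hmoment : (∫ x, (k x + 1 / 2 * f x) • x) j = (∫ x, x j * k x) + (∫ x, x j * f x) / 2 := by
    rw [integral_smul_self_apply (h := fun x => k x + 1 / 2 * f x)
        (hk.continuous.add (continuous_const.mul hf.continuous)) (hkc.add hfc.mul_left),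
      ← integral_add_half_mul (contDiff_coord_mul hf j).continuous
        (contDiff_coord_mul hk j).continuous hfc.mul_left hkc.mul_left]
    exact integral_congr_ae (.of_forall fun x => by ring)
  simp only [PiLp.smul_apply, hmoment, smul_eq_mul]
  convert (W.hasAmplitude_boost_apply hs j).tendsto_coneFactor_mul
    (regularAmplitude_fourierLaplace_coord_mul hk hkc j) (regularAmplitude_boost hf hfc j)
    (fun t ht => (contDiff_euclidean.1 (W.contDiff_boost ht.le) j).continuous)
    (fun t ht => W.hasCompactSupport_boost hs ht.le j) using 2
  ring

theorem tendsto_coneFactor_smul_fderiv_boost :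
    Tendsto (fun p : 𝔼 × ℝ => coneFactor p • fderiv ℝ (fun z => boost v z p.2) p.1)
      (coneFilter n) (𝓝 0) := by
  have hs := W.spatiallyCompact hfc hkc
  have hcoord : ∀ j, Tendsto (fun p : 𝔼 × ℝ =>
      ‖coneFactor p • fderiv ℝ (fun z => boost v z p.2 j) p.1‖) (coneFilter n) (𝓝 0) := fun j => by
    simpa using ((W.hasAmplitude_boost_apply hs j).tendsto_coneFactor_smul_fderiv
      (regularAmplitude_fourierLaplace_coord_mul hk hkc j)
      (regularAmplitude_boost hf hfc j)
      (fun t ht => contDiff_euclidean.1 (W.contDiff_boost ht.le) j)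
      (fun t ht => W.hasCompactSupport_boost hs ht.le j)).norm
  refine squeeze_zero_norm' ?_ (by simpa using tendsto_finsetSum Finset.univ fun j _ => hcoord j)
  filter_upwards [tendsto_time_coneFilter.eventually_gt_atTop 0] with p hp
  simp only [norm_smul, ← Finset.mul_sum]
  gcongr
  exact norm_fderiv_le_sum_norm_fderiv_apply
    ((W.contDiff_boost hp.le).differentiable one_ne_zero _)

end Asymptotics

end KleinGordon

/-! ### The unique critical point -/

theorem mem_critSet_iff {ψ : 𝔼 → ℝ} {x : 𝔼} (hψ : Continuous ψ) (hx : ψ x ≠ 0) :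
    x ∈ critSet ψ ↔ gradient ψ x = 0 :=
  and_iff_right (mem_interior.2 ⟨Function.support ψ, subset_tsupport ψ, hψ.isOpen_support, hx⟩)

theorem critSet_const_smul (ψ : 𝔼 → ℝ) {c : ℝ} (hc : c ≠ 0) : critSet (c • ψ) = critSet ψ := by
  ext x
  simp only [critSet, tsupport, Function.support_const_smul_of_ne_zero c ψ hc, gradient,
    EmbeddingLike.map_eq_zero_iff, fderiv_const_smul_field, Pi.smul_apply,
    smul_eq_zero_iff_right hc]

theorem centroid_mem_interior {h : 𝔼 → ℝ} (hcont : Continuous h) (hc : HasCompactSupport h)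
    (hpos : ∀ x, 0 ≤ h x) (hne : h ≠ 0) : centroid h ∈ interior (CS h) := by
  by_contra hm
  obtain ⟨L, hL⟩ := geometric_hahn_banach_open_point (convex_convexHull ℝ (tsupport h)).interior
    isOpen_interior hm
  obtain ⟨x₀, hx₀⟩ := Function.ne_iff.1 hne
  have hmass : 0 < ∫ y, h y := hcont.integral_pos_of_hasCompactSupport_nonneg_nonzero hc hpos hx₀
  have hsupp : ∀ y, h y ≠ 0 → L y < L (centroid h) := fun y hy =>
    hL y (mem_interior.2 ⟨Function.support h, (subset_tsupport h).trans (subset_convexHull ℝ _),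
      hcont.isOpen_support, hy⟩)
  have hint : Integrable fun y => h y • y :=
    (hcont.smul continuous_id).integrable_of_hasCompactSupport hc.smul_right
  have hzero : ∫ y, h y * (L (centroid h) - L y) = 0 := by
    have hexpand : ∀ y, h y * (L (centroid h) - L y) = h y * L (centroid h) - L (h y • y) :=
      fun y => by rw [map_smul, smul_eq_mul, mul_sub]
    simp_rw [hexpand]
    rw [integral_sub ((hcont.integrable_of_hasCompactSupport hc).mul_const _)
      (L.integrable_comp hint), integral_mul_const, L.integral_comp_comm hint, centroid, map_smul,
      smul_eq_mul, mul_inv_cancel_left₀ hmass.ne', sub_self]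
  refine (Continuous.integral_pos_of_hasCompactSupport_nonneg_nonzero (x := x₀)
    (hcont.mul (continuous_const.sub L.continuous)) hc.mul_right (fun y => ?_)
    (mul_ne_zero hx₀ (sub_pos.2 (hsupp x₀ hx₀)).ne')).ne' hzero
  rcases eq_or_ne (h y) 0 with hy | hy
  · simp [hy]
  · exact mul_nonneg (hpos y) (sub_nonneg.2 (hsupp y hy).le)

theorem eventually_add_smul_closedBall_subset {E : Type*} [NormedAddCommGroup E] [NormedSpace ℝ E]
    {K : Set E} (hK : Bornology.IsBounded K) {phi : ℝ → ℝ}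
    (hphi : Tendsto (fun t => phi t / t) atTop (𝓝 0)) {δ : ℝ} (hδ : 0 < δ) :
    ∀ᶠ t in atTop, K + phi t • closedBall (0 : E) 1 ⊆ closedBall 0 (δ * t) := by
  obtain ⟨R, hR⟩ := hK.subset_closedBall 0
  have hlim : Tendsto (fun t => R / t + |phi t / t|) atTop (𝓝 0) := by
    simpa using (tendsto_const_nhds.div_atTop tendsto_id).add hphi.abs
  filter_upwards [hlim.eventually_le_const hδ, eventually_gt_atTop 0] with t ht htpos
  rintro _ ⟨y, hy, _, ⟨b, hb, rfl⟩, rfl⟩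
  rw [abs_div, abs_of_pos htpos, ← add_div, div_le_iff₀ htpos] at ht
  refine mem_closedBall_zero_iff.2 ((norm_add_le _ _).trans (le_trans (add_le_add
    (mem_closedBall_zero_iff.1 (hR hy)) ?_) ht))
  simpa [norm_smul] using
    mul_le_mul_of_nonneg_left (mem_closedBall_zero_iff.1 hb) (abs_nonneg (phi t))

namespace KleinGordon

section CriticalPoint

variable {f k : EuclideanSpace ℝ (Fin n) → ℝ} {v : EuclideanSpace ℝ (Fin n) → ℝ → ℝ}
  (W : KleinGordon (1 / 4) f k v) (hf : ContDiff ℝ (⊤ : ℕ∞) f) (hk : ContDiff ℝ (⊤ : ℕ∞) k)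
  (hfc : HasCompactSupport f) (hkc : HasCompactSupport k)
  (hmass : ∫ x, (k x + 1 / 2 * f x) ≠ 0)

include W hf hk hfc hkc hmass

theorem eventually_ne_zero : ∀ᶠ p in coneFilter n, v p.1 p.2 ≠ 0 := by
  filter_upwards [(W.tendsto_coneFactor_mul hf hk hfc hkc).eventually_ne
    (mul_ne_zero (gaussConst_pos n).ne' hmass)] with p hp
  exact right_ne_zero_of_mul hp

theorem eventually_timeDeriv_ne_zero : ∀ᶠ p in coneFilter n, ∂ₜ v p.1 p.2 ≠ 0 := by
  filter_upwards [(W.tendsto_coneFactor_mul_timeDeriv hf hk hfc hkc).eventually_ne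
    (mul_ne_zero (half_pos (gaussConst_pos n)).ne' hmass)] with p hp
  exact right_ne_zero_of_mul hp

theorem tendsto_coneFactor_smul_boost_centroid :
    Tendsto (fun p => coneFactor p • boost v p.1 p.2) (coneFilter n)
      (𝓝 ((gaussConst n / 2 * ∫ x, (k x + 1 / 2 * f x)) •
        centroid fun x => k x + 1 / 2 * f x)) := by
  simpa only [centroid, mul_smul, smul_inv_smul₀ hmass] using
    W.tendsto_coneFactor_smul_boost hf hk hfc hkc

theorem tendsto_inv_smul_boost :
    Tendsto (fun p => (∂ₜ v p.1 p.2)⁻¹ • boost v p.1 p.2) (coneFilter n)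
      (𝓝 (centroid fun x => k x + 1 / 2 * f x)) :=
  tendsto_inv_smul_of_tendsto_smul (mul_ne_zero (half_pos (gaussConst_pos n)).ne' hmass)
    (W.tendsto_coneFactor_mul_timeDeriv hf hk hfc hkc)
    (W.tendsto_coneFactor_smul_boost_centroid hf hk hfc hkc hmass)

theorem tendsto_fderiv_inv_smul_boost :
    Tendsto (fun p : 𝔼 × ℝ => fderiv ℝ (fun z => (∂ₜ v z p.2)⁻¹ • boost v z p.2) p.1)
      (coneFilter n) (𝓝 0) := by
  have htime := tendsto_time_coneFilter (n := n).eventually_ge_atTop 0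
  exact tendsto_fderiv_inv_smul (l := coneFilter n) (N := coneFactor)
    (P := fun p z => ∂ₜ v z p.2) (Q := fun p z => boost v z p.2) (x := Prod.fst)
    (mul_ne_zero (half_pos (gaussConst_pos n)).ne' hmass)
    (htime.mono fun p hp => (W.contDiff_partialDeriv_slice hp _).differentiable one_ne_zero _)
    (htime.mono fun p hp => (W.contDiff_boost hp).differentiable one_ne_zero _)
    (W.tendsto_coneFactor_mul_timeDeriv hf hk hfc hkc)
    (W.tendsto_coneFactor_smul_boost_centroid hf hk hfc hkc hmass)
    (W.tendsto_coneFactor_smul_fderiv_timeDeriv hf hk hfc hkc)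
    (W.tendsto_coneFactor_smul_fderiv_boost hf hk hfc hkc)

theorem exists_critSet_inter_closedBall_eq_singleton {ε : ℝ} (hε : 0 < ε) :
    ∃ δ > 0, ∀ᶠ t in atTop, ∃ p ∈ ball (centroid fun x => k x + 1 / 2 * f x) ε,
      critSet (fun x => v x t) ∩ closedBall 0 (δ * t) = {p} := by
  set m := centroid fun x => k x + 1 / 2 * f x
  obtain ⟨δ, hδ, hball⟩ := exists_closedBall_of_eventually_coneFilter
    ((W.eventually_ne_zero hf hk hfc hkc hmass).and <|
      (W.eventually_timeDeriv_ne_zero hf hk hfc hkc hmass).and <|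
      ((W.tendsto_inv_smul_boost hf hk hfc hkc hmass).eventually (ball_mem_nhds m hε)).and <|
      (W.tendsto_fderiv_inv_smul_boost hf hk hfc hkc hmass).eventually
        (closedBall_mem_nhds 0 one_half_pos))
  refine ⟨δ, hδ, ?_⟩
  filter_upwards [hball, eventually_gt_atTop 0,
    (tendsto_id.const_mul_atTop hδ).eventually_ge_atTop (‖m‖ + ε)] with t ht htpos hlarge
  have hsub : ball m ε ⊆ closedBall 0 (δ * t) := fun x hx => by
    have := norm_le_norm_add_norm_sub' x m
    rw [mem_ball_iff_norm] at hx
    exact mem_closedBall_zero_iff.2 (by simp only [id_eq] at hlarge; linarith)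
  obtain ⟨p, ⟨hp, hfix⟩, huniq⟩ := existsUnique_fixedPoint_of_nnnorm_fderiv_le
    (F := fun x => (∂ₜ v x t)⁻¹ • boost v x t) (c := 1 / 2)
    (isCompact_closedBall (0 : 𝔼) (δ * t)).isComplete (convex_closedBall _ _)
    ⟨m, hsub (mem_ball_self hε)⟩ one_half_lt_one
    (fun x hx => (((W.contDiff_partialDeriv_slice htpos.le _).differentiable one_ne_zero x).inv
      (ht x hx).2.1).smul ((W.contDiff_boost htpos.le).differentiable one_ne_zero x))
    (fun x hx => by simpa [← NNReal.coe_le_coe] using (ht x hx).2.2.2)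
    (fun x hx => hsub (ht x hx).2.2.1)
  have hcrit : ∀ x ∈ closedBall 0 (δ * t),
      (x ∈ critSet (fun x => v x t) ↔ (∂ₜ v x t)⁻¹ • boost v x t = x) := fun x hx => by
    rw [mem_critSet_iff (contDiff_slice W.contDiffOn htpos.le).continuous (ht x hx).1,
      inv_smul_boost_eq_iff htpos.ne' (ht x hx).2.1]
  refine ⟨p, hfix ▸ (ht p hp).2.2.1, Set.ext fun x => ⟨fun hx => ?_, ?_⟩⟩
  · exact huniq x ⟨hx.2, (hcrit x hx.2).1 hx.1⟩
  · rintro rfl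
    exact ⟨(hcrit x hp).2 hfix, hp⟩

end CriticalPoint

end KleinGordon

theorem unique_critical_point_general {f g : 𝔼 → ℝ}
    (hf : ContDiff ℝ (⊤ : ℕ∞) f) (hg : ContDiff ℝ (⊤ : ℕ∞) g)
    (hfc : HasCompactSupport f) (hgc : HasCompactSupport g)
    (hne : f + g ≠ 0) (hpos : ∀ x, 0 ≤ f x + g x) {u : 𝔼 → ℝ → ℝ}
    (hreg : ContDiffOn ℝ 2 (fun p : 𝔼 × ℝ => u p.1 p.2) (univ ×ˢ Ici 0))
    (hpde : ∀ x, ∀ t > (0 : ℝ),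
      deriv (deriv (fun s => u x s)) t - lap (fun z => u z t) x
        + deriv (fun s => u x s) t = 0)
    (hu0 : ∀ x, u x 0 = f x)
    (hu1 : ∀ x, derivWithin (fun s => u x s) (Ici 0) 0 = g x) {phi : ℝ → ℝ}
    (hphi : Tendsto (fun t => phi t / t) atTop (𝓝 0)) :
    ∀ᶠ t in atTop, ∃ p, critSet (fun z => u z t) ∩
      (CS (f + g) + phi t • closedBall (0 : 𝔼) 1) = {p} := by
  have hh : (fun x => g x + 1 / 2 * f x + 1 / 2 * f x) = f + g := by
    ext x
    simp only [Pi.add_apply]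
    ring
  have hcont := hf.continuous.add hg.continuous
  have hc := hfc.add hgc
  obtain ⟨x₀, hx₀⟩ := Function.ne_iff.1 hne
  have hmass : 0 < ∫ x, (f + g) x :=
    hcont.integral_pos_of_hasCompactSupport_nonneg_nonzero hc hpos hx₀
  obtain ⟨ε, hε, hball⟩ := Metric.mem_nhds_iff.1
    (mem_interior_iff_mem_nhds.1 (centroid_mem_interior hcont hc hpos hne))
  have W := kleinGordon_exp_mul_of_dampedWave hreg hpde hu0 hu1
  obtain ⟨δ, hδ, hunique⟩ := W.exists_critSet_inter_closedBall_eq_singleton hf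
    (hg.add (contDiff_const.mul hf)) hfc (hgc.add hfc.mul_left) (by simpa only [hh] using hmass.ne')
    hε
  filter_upwards [hunique, eventually_add_smul_closedBall_subset
    (isBounded_convexHull.2 hc.isCompact.isBounded) hphi hδ] with t ⟨p, hp, hcrit⟩ hsub
  have hCS : p ∈ CS (f + g) + phi t • closedBall (0 : 𝔼) 1 :=
    ⟨p, hball (hh ▸ hp), 0, ⟨0, by simp, smul_zero _⟩, add_zero p⟩
  have hcrit' : critSet (fun z => u z t) ∩ closedBall 0 (δ * t) = {p} := by
    rw [← hcrit, ← critSet_const_smul _ (exp_ne_zero (1 / 2 * t))]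
    rfl
  refine ⟨p, Subset.antisymm (hcrit' ▸ inter_subset_inter_right _ hsub) ?_⟩
  rw [singleton_subset_iff]
  exact ⟨(hcrit'.ge rfl).1, hCS⟩

/-- cf. Proposition `uniqueness`. For `φ` non-decreasing with `φ(0)=0`
and `φ(t)/t → 0`, there is `T ≥ max{T₀(φ), δ(CS(f),CS(h)) + d_f}` such that for all
`t ≥ T` the set `𝒞(u(·,t)) ∩ (CS(h) + φ(t)Bⁿ)` consists of exactly one point
(`h = f + g`). -/
theorem unique_critical_point (n : ℕ) (hn : 1 ≤ n)
    (f g : EuclideanSpace ℝ (Fin n) → ℝ)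
    (hf : ContDiff ℝ (⊤ : ℕ∞) f) (hg : ContDiff ℝ (⊤ : ℕ∞) g)
    (hfc : HasCompactSupport f) (hgc : HasCompactSupport g)
    (hne : f + g ≠ 0) (hpos : ∀ x, 0 ≤ f x + g x)
    (u : EuclideanSpace ℝ (Fin n) → ℝ → ℝ)
    (hreg : ContDiffOn ℝ 2 (fun p : EuclideanSpace ℝ (Fin n) × ℝ => u p.1 p.2) (univ ×ˢ Ici 0))
    (hpde : ∀ x, ∀ t > (0 : ℝ),
      deriv (deriv (fun s => u x s)) t - lap (fun z => u z t) x
        + deriv (fun s => u x s) t = 0)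
    (hu0 : ∀ x, u x 0 = f x)
    (hu1 : ∀ x, derivWithin (fun s => u x s) (Ici 0) 0 = g x)
    (phi : ℝ → ℝ) (hphi0 : phi 0 = 0) (hphimono : MonotoneOn phi (Ici 0))
    (hphinn : ∀ t ≥ (0 : ℝ), 0 ≤ phi t)
    (hphio : Tendsto (fun t => phi t / t) atTop (𝓝 0)) :
    ∃ T, max (T0 f g phi) (deltaCC (CS f) (CS (f + g)) + dsupp f) ≤ T ∧
      ∀ t ≥ T, ∃ p : EuclideanSpace ℝ (Fin n),
        critSet (fun z => u z t) ∩
          (CS (f + g) + phi t • closedBall (0 : EuclideanSpace ℝ (Fin n)) 1) = {p} := by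
  obtain ⟨T, hT⟩ := eventually_atTop.1
    (unique_critical_point_general hf hg hfc hgc hne hpos hreg hpde hu0 hu1 hphio)
  exact ⟨max _ T, le_max_left _ _, fun t ht => hT t ((le_max_right _ _).trans ht)⟩
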